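/- Fix an odd prime p and ε ∈ (0,1). There is a constant C_{p,ε} < ∞ such that the following holds. Let h = 2m ≥ 2 with h ≤ ε·r. For all sufficiently large r, the half-lazy PA-PRA walk on V_r(H) satisfies τ_mix ≤ C_{p,ε}·r·(h + log r)·log r. In particular, if h ≥ log r then τ_mix ≤ C_{p,ε}·r·h·log r. -/

import Mathlib

noncomputable section

/-- Data of a bilinear form on `W` turning `W × ZMod p` into a Heisenberg group. -/
class HeisData (p : ℕ) (W : Type*) [Fact (Nat.Prime p)] [AddCommGroup W]
    [Module (ZMod p) W] where
  ω : W →ₗ[ZMod p] W →ₗ[ZMod p] ZMod p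

/-- The Heisenberg group structure on `W × ZMod p`:
`(v,z)·(w,t) = (v+w, z+t+ω(v,w)/2)`. -/
instance heisGroup (p : ℕ) (W : Type*) [Fact (Nat.Prime p)] [AddCommGroup W]
    [Module (ZMod p) W] [HeisData p W] : Group (W × ZMod p) where
  mul x y := (x.1 + y.1, x.2 + y.2 + (2 : ZMod p)⁻¹ * HeisData.ω x.1 y.1)
  one := ((0 : W), (0 : ZMod p))
  inv x := (-x.1, -x.2 + (2 : ZMod p)⁻¹ * HeisData.ω x.1 x.1)
  mul_assoc a b c := by
    refine Prod.ext ?_ ?_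
    · show a.1 + b.1 + c.1 = a.1 + (b.1 + c.1)
      exact add_assoc _ _ _
    · show a.2 + b.2 + (2 : ZMod p)⁻¹ * HeisData.ω a.1 b.1 + c.2 +
          (2 : ZMod p)⁻¹ * HeisData.ω (a.1 + b.1) c.1 =
        a.2 + (b.2 + c.2 + (2 : ZMod p)⁻¹ * HeisData.ω b.1 c.1) +
          (2 : ZMod p)⁻¹ * HeisData.ω a.1 (b.1 + c.1)
      simp only [map_add, LinearMap.add_apply]
      ring
  one_mul a := by
    refine Prod.ext ?_ ?_
    · show 0 + a.1 = a.1; simp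
    · show 0 + a.2 + (2 : ZMod p)⁻¹ * HeisData.ω 0 a.1 = a.2
      simp
  mul_one a := by
    refine Prod.ext ?_ ?_
    · show a.1 + 0 = a.1; simp
    · show a.2 + 0 + (2 : ZMod p)⁻¹ * HeisData.ω a.1 0 = a.2
      simp
  inv_mul_cancel a := by
    refine Prod.ext ?_ ?_
    · show -a.1 + a.1 = 0; simp
    · show -a.2 + (2 : ZMod p)⁻¹ * HeisData.ω a.1 a.1 + a.2 +
          (2 : ZMod p)⁻¹ * HeisData.ω (-a.1) a.1 = 0
      simp only [map_neg, LinearMap.neg_apply]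
      ring

open Finset

/-- Total variation distance between two densities on a finite set. -/
def tvDist {X : Type*} [Fintype X] (f g : X → ℝ) : ℝ := (1 / 2) * ∑ x, |f x - g x|

open Classical in
/-- The uniform probability density on a subset of a finite set. -/
def unifOn {X : Type*} [Fintype X] (G : Set X) : X → ℝ :=
  fun x => if x ∈ G then (Nat.card G : ℝ)⁻¹ else 0

/-- Mixing time: the first time all rows started in `start` are within 1/4 of `π`. -/
def mixTime {X : Type*} [Fintype X] [DecidableEq X] (Q : Matrix X X ℝ) (π : X → ℝ)
    (start : Set X) : ℕ :=
  sInf {t : ℕ | ∀ x ∈ start, tvDist ((Q ^ t) x) π ≤ 1 / 4}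

/-- Tuples generating the whole group. -/
def genSet (r : ℕ) (H : Type*) [Group H] : Set (Fin r → H) :=
  {g | Subgroup.closure (Set.range g) = ⊤}

/-- The PA-PRA kernel on `H^r`. -/
def paP (p : ℕ) [Fact (Nat.Prime p)] (r : ℕ) (H : Type*) [Group H] [Fintype H]
    [DecidableEq H] : Matrix (Fin r → H) (Fin r → H) ℝ :=
  fun g g' => (∑ i : Fin r, ∑ j : Fin r, ∑ a : ZMod p,
    ((if i ≠ j ∧ g' = Function.update g i (g i * (g j) ^ (a.val)) then (1 : ℝ) else 0) +
     (if i ≠ j ∧ g' = Function.update g i ((g j) ^ (a.val) * g i) then (1 : ℝ) else 0)))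
    / (2 * (p : ℝ) * r * ((r : ℝ) - 1))

/-- The half-lazy PA-PRA kernel. -/
def paQ (p : ℕ) [Fact (Nat.Prime p)] (r : ℕ) (H : Type*) [Group H] [Fintype H]
    [DecidableEq H] : Matrix (Fin r → H) (Fin r → H) ℝ :=
  (2⁻¹ : ℝ) • ((1 : Matrix (Fin r → H) (Fin r → H) ℝ) + paP p r H)

/-!
A step of the walk resamples one coordinate `g i` uniformly along the powers of another coordinate,
on the left or on the right. Relative entropy with respect to the uniform measure on all of `H ^ r`
(the non-generating tuples are negligible) therefore contracts as soon as, for every `i`, averaging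
over the powers of the other coordinates contracts the entropy of functions of a single group
element, because entropy tensorizes.

For the Heisenberg group this one-variable contraction holds for every set of coordinates whose
`W`-components span `W`: averaging over these coordinates controls the Hellinger shifts along them,
and the centre, being generated by a commutator, costs only finitely many more shifts. With the
coordinates split into about `r / (h + log r)` classes, each of which spans, the contraction rate is
of order `1 / (r (h + log r))`.

Spanning fails only if some nonzero functional on `W` vanishes on a whole class. A functional maps
the walk onto the walk on `ZMod p`, which mixes in `O(r log r)` steps by the same entropy argument,
and after `k` such rounds the vanishing has probability at most `2 p⁻ᵈ + 2⁻ᵏ` for a class of size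
`d`. Taking `d` and `k` of order `h + log r` beats the union bound over the `p ^ h` functionals.
-/

open scoped BigOperators Matrix

section ScalarBounds

lemma sq_sqrt_sub_sqrt_le_mul_log_sub {a b : ℝ} (ha : 0 ≤ a) (hb : 0 ≤ b) (hab : b = 0 → a = 0) :
    (√a - √b) ^ 2 ≤ a * Real.log a - a * Real.log b - (a - b) := by
  rcases ha.eq_or_lt with rfl | ha
  · simp [Real.sq_sqrt hb]
  have hb : 0 < b := hb.lt_of_ne' fun h => ha.ne' (hab h)
  have hsa : 0 < √a := Real.sqrt_pos.2 ha
  have hsb : 0 < √b := Real.sqrt_pos.2 hb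
  have hlog := Real.log_le_sub_one_of_pos (div_pos hsb hsa)
  rw [Real.log_div hsb.ne' hsa.ne', Real.log_sqrt hb.le, Real.log_sqrt ha.le] at hlog
  have hmul : 2 * a * (Real.log b / 2 - Real.log a / 2) ≤ 2 * a * (√b / √a - 1) :=
    mul_le_mul_of_nonneg_left hlog (by positivity)
  have hcancel : a * (√b / √a) = √a * √b := by
    nth_rewrite 1 [← Real.mul_self_sqrt ha.le]
    field_simp
  nlinarith [Real.sq_sqrt ha.le, Real.sq_sqrt hb.le]

lemma sub_le_mul_log_sub {a b : ℝ} (ha : 0 ≤ a) (hb : 0 ≤ b) (hab : b = 0 → a = 0) :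
    a - b ≤ a * Real.log a - a * Real.log b := by
  linarith [sq_sqrt_sub_sqrt_le_mul_log_sub ha hb hab, sq_nonneg (√a - √b)]

lemma mul_log_sub_le_sq_div {a b : ℝ} (ha : 0 ≤ a) (hb : 0 ≤ b) (hab : b = 0 → a = 0) :
    a * Real.log a - a * Real.log b - (a - b) ≤ (a - b) ^ 2 / b := by
  rcases ha.eq_or_lt with rfl | ha
  · rcases hb.eq_or_lt with rfl | hb
    · simp
    · simp [sq, hb.ne']
  have hb : 0 < b := hb.lt_of_ne' fun h => ha.ne' (hab h)
  have hlog := Real.log_le_sub_one_of_pos (div_pos ha hb)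
  rw [Real.log_div ha.ne' hb.ne'] at hlog
  have hexpand : a * (a / b - 1) - (a - b) = (a - b) ^ 2 / b := by field_simp
  linarith [mul_le_mul_of_nonneg_left hlog ha.le]

lemma one_sub_pow_le_exp_neg {θ : ℝ} (hθ : θ ≤ 1) (t : ℕ) :
    (1 - θ) ^ t ≤ Real.exp (-(θ * t)) :=
  calc (1 - θ) ^ t ≤ Real.exp (-θ) ^ t :=
        pow_le_pow_left₀ (sub_nonneg.2 hθ) (Real.one_sub_le_exp_neg θ) t
    _ = Real.exp (-(θ * t)) := by rw [← Real.exp_nat_mul]; ring_nf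

lemma mul_geom_sum_one_sub_le_one {θ : ℝ} (hθ : θ ≤ 1) (t : ℕ) :
    θ * ∑ s ∈ range t, (1 - θ) ^ s ≤ 1 := by
  have hgeom := geom_sum_mul_neg (1 - θ) t
  rw [sub_sub_cancel] at hgeom
  linarith [pow_nonneg (sub_nonneg.2 hθ) t]

end ScalarBounds

section NegEntropy

variable {X K : Type*} [Fintype X] [Fintype K]

/-- The negative Shannon entropy `∑ φ log φ` of a (not necessarily normalised) density `φ`. -/
def negEntropy (φ : X → ℝ) : ℝ := ∑ x, φ x * Real.log (φ x)

/-- The entropy of `φ` relative to the uniform density of the same mass. -/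
def entropyGap (φ : X → ℝ) : ℝ := negEntropy φ - negEntropy fun _ : X => 𝔼 y, φ y

lemma negEntropy_expect_le [Nonempty K] {f : K → X → ℝ} (hf : ∀ k x, 0 ≤ f k x) :
    negEntropy (fun x => 𝔼 k, f k x) ≤ 𝔼 k, negEntropy (f k) := by
  unfold negEntropy
  rw [expect_sum_comm]
  refine sum_le_sum fun x _ => ?_
  have hcard : (Fintype.card K : ℝ) ≠ 0 := by exact_mod_cast Fintype.card_ne_zero
  have hjensen := Real.convexOn_mul_log.map_sum_le (t := univ)
    (w := fun _ : K => (Fintype.card K : ℝ)⁻¹) (p := fun k => f k x)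
    (fun _ _ => by positivity) (by simp [hcard]) fun k _ => hf k x
  simpa only [Fintype.expect_eq_sum_div_card, div_eq_inv_mul, smul_eq_mul, ← mul_sum] using hjensen

lemma negEntropy_half_add_le {f g : X → ℝ} (hf : ∀ x, 0 ≤ f x) (hg : ∀ x, 0 ≤ g x) :
    negEntropy (fun x => (f x + g x) / 2) ≤ (negEntropy f + negEntropy g) / 2 := by
  unfold negEntropy
  rw [← sum_add_distrib, sum_div]
  refine sum_le_sum fun x _ => ?_
  have hhalf : (0 : ℝ) ≤ 1 / 2 := by norm_num
  have hconv := Real.convexOn_mul_log.2 (hf x) (hg x) hhalf hhalf (by norm_num)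
  simpa only [smul_eq_mul, one_div, ← div_eq_inv_mul, ← add_div] using hconv

lemma negEntropy_nonpos {q : X → ℝ} (hq : ∀ x, 0 ≤ q x) (hq1 : ∑ x, q x = 1) :
    negEntropy q ≤ 0 := by
  refine sum_nonpos fun x _ => Real.mul_log_nonpos (hq x) ?_
  rw [← hq1]
  exact single_le_sum (fun y _ => hq y) (mem_univ x)

lemma le_card_mul_expect {φ : X → ℝ} (hφ : ∀ x, 0 ≤ φ x) (x : X) :
    φ x ≤ Fintype.card X * 𝔼 y, φ y := by
  rw [Fintype.card_mul_expect]
  exact single_le_sum (fun y _ => hφ y) (mem_univ x)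

lemma sum_expect_const (φ : X → ℝ) : ∑ _x : X, 𝔼 y, φ y = ∑ x, φ x := by
  rw [sum_const, card_univ, nsmul_eq_mul, Fintype.card_mul_expect]

lemma entropyGap_eq_sum (φ : X → ℝ) :
    entropyGap φ = ∑ x, (φ x * Real.log (φ x) - φ x * Real.log (𝔼 y, φ y)) := by
  unfold entropyGap negEntropy
  rw [sum_sub_distrib, ← sum_mul, ← sum_mul, sum_expect_const]

lemma entropyGap_le_log_card_mul_sum {φ : X → ℝ} (hφ : ∀ x, 0 ≤ φ x) :
    entropyGap φ ≤ Real.log (Fintype.card X) * ∑ x, φ x := by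
  rw [entropyGap_eq_sum, mul_sum]
  refine sum_le_sum fun x _ => ?_
  rcases (hφ x).eq_or_lt with hx | hx
  · simp [← hx]
  have hmean : 0 < 𝔼 y, φ y := expect_pos' (fun y _ => hφ y) ⟨x, mem_univ x, hx⟩
  have hcard : (Fintype.card X : ℝ) ≠ 0 := by
    exact_mod_cast (Fintype.card_pos_iff.2 ⟨x⟩).ne'
  have hlog := Real.log_le_log hx (le_card_mul_expect hφ x)
  rw [Real.log_mul hcard hmean.ne'] at hlog
  nlinarith

lemma entropyGap_eq_add_log_card {q : X → ℝ} (hq1 : ∑ x, q x = 1) :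
    entropyGap q = negEntropy q + Real.log (Fintype.card X) := by
  rw [entropyGap_eq_sum, sum_sub_distrib, ← sum_mul, hq1, Fintype.expect_eq_sum_div_card, hq1,
    one_div, Real.log_inv, one_mul, sub_neg_eq_add, negEntropy]

lemma entropyGap_le_log_card {q : X → ℝ} (hq : ∀ x, 0 ≤ q x) (hq1 : ∑ x, q x = 1) :
    entropyGap q ≤ Real.log (Fintype.card X) := by
  linarith [entropyGap_eq_add_log_card hq1, negEntropy_nonpos hq hq1]

lemma sum_sq_sqrt_sub_sqrt_expect_le_entropyGap {φ : X → ℝ} (hφ : ∀ x, 0 ≤ φ x) :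
    ∑ x, (√(φ x) - √(𝔼 y, φ y)) ^ 2 ≤ entropyGap φ := by
  have hmean : 0 ≤ 𝔼 y, φ y := expect_nonneg fun y _ => hφ y
  have hpoint : ∀ x, _ := fun x => sq_sqrt_sub_sqrt_le_mul_log_sub (hφ x) hmean fun h =>
    le_antisymm (by simpa [h] using le_card_mul_expect hφ x) (hφ x)
  have hsum := sum_le_sum fun x (_ : x ∈ univ) => hpoint x
  rw [sum_sub_distrib, ← entropyGap_eq_sum, sum_sub_distrib, sum_expect_const] at hsum
  linarith

lemma entropyGap_nonneg {φ : X → ℝ} (hφ : ∀ x, 0 ≤ φ x) : 0 ≤ entropyGap φ :=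
  (sum_nonneg fun _ _ => sq_nonneg _).trans (sum_sq_sqrt_sub_sqrt_expect_le_entropyGap hφ)

lemma sq_sum_abs_sub_le_entropyGap {q : X → ℝ} (hq : ∀ x, 0 ≤ q x) (hq1 : ∑ x, q x = 1) :
    (∑ x, |q x - (Fintype.card X : ℝ)⁻¹|) ^ 2 ≤ 4 * entropyGap q := by
  have hmean : 𝔼 y, q y = (Fintype.card X : ℝ)⁻¹ := by
    rw [Fintype.expect_eq_sum_div_card, hq1, one_div]
  have hu : 0 ≤ 𝔼 y, q y := expect_nonneg fun y _ => hq y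
  have hfactor : ∀ x, |q x - 𝔼 y, q y| = |√(q x) - √(𝔼 y, q y)| * (√(q x) + √(𝔼 y, q y)) := by
    intro x
    nth_rewrite 1 [← Real.sq_sqrt (hq x), ← Real.sq_sqrt hu]
    rw [sq_sub_sq, abs_mul, mul_comm, abs_of_nonneg (a := √(q x) + √(𝔼 y, q y)) (by positivity)]
  have hadd : ∑ x, (√(q x) + √(𝔼 y, q y)) ^ 2 ≤ 4 := by
    calc ∑ x, (√(q x) + √(𝔼 y, q y)) ^ 2 ≤ ∑ x, (2 * q x + 2 * 𝔼 y, q y) :=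
          sum_le_sum fun x _ => by
            nlinarith [Real.sq_sqrt (hq x), Real.sq_sqrt hu, sq_nonneg (√(q x) - √(𝔼 y, q y))]
      _ = 4 := by rw [sum_add_distrib, ← mul_sum, ← mul_sum, sum_expect_const, hq1]; norm_num
  have hcs := sum_mul_sq_le_sq_mul_sq univ (fun x => |√(q x) - √(𝔼 y, q y)|)
    fun x => √(q x) + √(𝔼 y, q y)
  simp only [sq_abs] at hcs
  simp only [← hmean, hfactor]
  calc _ ≤ _ := hcs
    _ ≤ (∑ x, (√(q x) - √(𝔼 y, q y)) ^ 2) * 4 :=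
      mul_le_mul_of_nonneg_left hadd (sum_nonneg fun x _ => sq_nonneg _)
    _ ≤ 4 * entropyGap q := by linarith [sum_sq_sqrt_sub_sqrt_expect_le_entropyGap hq]

end NegEntropy

section OrbitAverage

variable {X G G' : Type*} [Group G] [Fintype G] [Group G']

/-- The average of `φ` over the orbits of the permutation action `σ`, i.e. the conditional
expectation of `φ` given the `σ`-invariant functions. -/
def orbitAvg (σ : G →* Equiv.Perm X) (φ : X → ℝ) (x : X) : ℝ := 𝔼 a, φ (σ a x)

variable {σ : G →* Equiv.Perm X} {τ : G' →* Equiv.Perm X} {φ : X → ℝ}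

lemma orbitAvg_nonneg (hφ : ∀ x, 0 ≤ φ x) (x : X) : 0 ≤ orbitAvg σ φ x :=
  expect_nonneg fun _ _ => hφ _

lemma le_card_mul_orbitAvg (hφ : ∀ x, 0 ≤ φ x) (x : X) :
    φ x ≤ Fintype.card G * orbitAvg σ φ x := by
  simpa only [map_one, Equiv.Perm.one_apply] using!
    le_card_mul_expect (φ := fun a => φ (σ a x)) (fun a => hφ _) 1

lemma eq_zero_of_orbitAvg_eq_zero (hφ : ∀ x, 0 ≤ φ x) {x : X} (hx : orbitAvg σ φ x = 0) :
    φ x = 0 :=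
  le_antisymm (by simpa [hx] using le_card_mul_orbitAvg (σ := σ) hφ x) (hφ x)

lemma orbitAvg_apply_perm (φ : X → ℝ) (b : G) (x : X) :
    orbitAvg σ φ (σ b x) = orbitAvg σ φ x := by
  unfold orbitAvg
  exact Fintype.expect_equiv (Equiv.mulRight b) _ _ fun a => by simp

lemma orbitAvg_invariant_of_commute (hστ : ∀ a b, Commute (σ a) (τ b))
    (hφ : ∀ b x, φ (τ b x) = φ x) (b : G') (x : X) :
    orbitAvg σ φ (τ b x) = orbitAvg σ φ x := by
  refine expect_congr rfl fun a _ => ?_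
  rw [← Equiv.Perm.mul_apply, (hστ a b).eq, Equiv.Perm.mul_apply, hφ]

lemma sq_sub_orbitAvg_div_le (hφ : ∀ x, 0 ≤ φ x) (x : X) :
    (φ x - orbitAvg σ φ x) ^ 2 / orbitAvg σ φ x
      ≤ 4 * ∑ a, (√(φ (σ a x)) - √(φ x)) ^ 2 := by
  set s : G → ℝ := fun a => √(φ (σ a x))
  have hs : ∀ a, s a ^ 2 = φ (σ a x) := fun a => Real.sq_sqrt (hφ _)
  have hx : √(φ x) ^ 2 = φ x := Real.sq_sqrt (hφ x)
  have hcard : (1 : ℝ) ≤ Fintype.card G := by exact_mod_cast Fintype.card_pos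
  have havg := orbitAvg_nonneg (σ := σ) hφ x
  have hdiff : orbitAvg σ φ x - φ x = 𝔼 a, (s a - √(φ x)) * (s a + √(φ x)) := by
    have hfactor : ∀ a, (s a - √(φ x)) * (s a + √(φ x)) = φ (σ a x) - φ x := fun a => by
      rw [← hs a, ← hx, Real.sqrt_sq (Real.sqrt_nonneg _)]; ring
    simp only [hfactor, expect_sub_distrib, Fintype.expect_const, orbitAvg]
  have hadd : 𝔼 a, (s a + √(φ x)) ^ 2 ≤ 4 * Fintype.card G * orbitAvg σ φ x := by
    calc 𝔼 a, (s a + √(φ x)) ^ 2 ≤ 𝔼 a, (2 * φ (σ a x) + 2 * φ x) :=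
          expect_le_expect fun a _ => by nlinarith [sq_nonneg (s a - √(φ x)), hs a]
      _ = 2 * orbitAvg σ φ x + 2 * φ x := by
          rw [expect_add_distrib, Fintype.expect_const, ← mul_expect, orbitAvg]
      _ ≤ 4 * Fintype.card G * orbitAvg σ φ x := by
          nlinarith [le_card_mul_orbitAvg (σ := σ) hφ x]
  have hsub : 0 ≤ 𝔼 a, (s a - √(φ x)) ^ 2 := expect_nonneg fun _ _ => sq_nonneg _
  refine div_le_of_le_mul₀ havg (by positivity) ?_
  calc (φ x - orbitAvg σ φ x) ^ 2 = (𝔼 a, (s a - √(φ x)) * (s a + √(φ x))) ^ 2 := by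
        rw [← hdiff]; ring
    _ ≤ (𝔼 a, (s a - √(φ x)) ^ 2) * 𝔼 a, (s a + √(φ x)) ^ 2 := expect_mul_sq_le_sq_mul_sq _ _ _
    _ ≤ (𝔼 a, (s a - √(φ x)) ^ 2) * (4 * Fintype.card G * orbitAvg σ φ x) :=
        mul_le_mul_of_nonneg_left hadd hsub
    _ = 4 * (Fintype.card G * 𝔼 a, (s a - √(φ x)) ^ 2) * orbitAvg σ φ x := by ring
    _ = 4 * (∑ a, (s a - √(φ x)) ^ 2) * orbitAvg σ φ x := by rw [Fintype.card_mul_expect]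

lemma orbitAvg_comm [Fintype G'] (hστ : ∀ a b, Commute (σ a) (τ b)) (φ : X → ℝ) :
    orbitAvg σ (orbitAvg τ φ) = orbitAvg τ (orbitAvg σ φ) := by
  funext x
  unfold orbitAvg
  rw [expect_comm]
  refine expect_congr rfl fun b _ => expect_congr rfl fun a _ => ?_
  rw [← Equiv.Perm.mul_apply, ← Equiv.Perm.mul_apply, (hστ a b).eq]

variable [Fintype X]

lemma sum_orbitAvg_mul {θ : X → ℝ} (hθ : ∀ b x, θ (σ b x) = θ x) (φ : X → ℝ) :
    ∑ x, orbitAvg σ φ x * θ x = ∑ x, φ x * θ x := by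
  calc ∑ x, orbitAvg σ φ x * θ x = 𝔼 a, ∑ x, φ (σ a x) * θ (σ a x) := by
        simp only [orbitAvg, expect_mul, expect_sum_comm, hθ]
    _ = 𝔼 _a : G, ∑ x, φ x * θ x :=
        expect_congr rfl fun a _ => Equiv.sum_comp (σ a) fun x => φ x * θ x
    _ = ∑ x, φ x * θ x := Fintype.expect_const _

lemma sum_orbitAvg (φ : X → ℝ) : ∑ x, orbitAvg σ φ x = ∑ x, φ x := by
  simpa using sum_orbitAvg_mul (σ := σ) (θ := fun _ => 1) (fun _ _ => rfl) φ

lemma negEntropy_orbitAvg (φ : X → ℝ) :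
    negEntropy (orbitAvg σ φ) = ∑ x, φ x * Real.log (orbitAvg σ φ x) :=
  sum_orbitAvg_mul (fun b x => by rw [orbitAvg_apply_perm]) φ

lemma eq_expect_of_forall_eq {F : X → ℝ} (hF : ∀ x y, F x = F y) (x : X) : F x = 𝔼 y, F y := by
  have : Nonempty X := ⟨x⟩
  rw [expect_congr rfl fun y _ => hF y x, Fintype.expect_const]

lemma orbitAvg_eq_expect_of_transitive (hσ : ∀ x y, ∃ a, σ a x = y) (φ : X → ℝ) :
    orbitAvg σ φ = fun _ => 𝔼 y, φ y := by
  funext x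
  rw [eq_expect_of_forall_eq (F := orbitAvg σ φ) _ x, Fintype.expect_eq_sum_div_card,
    Fintype.expect_eq_sum_div_card, sum_orbitAvg]
  intro x y
  obtain ⟨a, rfl⟩ := hσ x y
  rw [orbitAvg_apply_perm]

end OrbitAverage

section EntropyDrop

variable {X G G' : Type*} [Fintype X] [Group G] [Fintype G] [Group G'] [Fintype G']
  {σ : G →* Equiv.Perm X} {τ : G' →* Equiv.Perm X} {φ : X → ℝ}

/-- The entropy lost by averaging `φ` over the orbits of `σ`. -/
def entropyDrop (σ : G →* Equiv.Perm X) (φ : X → ℝ) : ℝ :=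
  negEntropy φ - negEntropy (orbitAvg σ φ)

/-- The squared Hellinger distance between `φ` and its translate by the permutation `e`. -/
def hellingerShift (φ : X → ℝ) (e : Equiv.Perm X) : ℝ := ∑ x, (√(φ (e x)) - √(φ x)) ^ 2

lemma entropyDrop_eq_sum (σ : G →* Equiv.Perm X) (φ : X → ℝ) :
    entropyDrop σ φ = ∑ x, (φ x * Real.log (φ x) - φ x * Real.log (orbitAvg σ φ x)
      - (φ x - orbitAvg σ φ x)) := by
  rw [sum_sub_distrib, sum_sub_distrib, sum_sub_distrib, sum_orbitAvg, sub_self, sub_zero,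
    ← negEntropy_orbitAvg, entropyDrop, negEntropy]

lemma entropyDrop_eq_entropyGap_of_transitive (hσ : ∀ x y, ∃ a, σ a x = y) (φ : X → ℝ) :
    entropyDrop σ φ = entropyGap φ := by
  rw [entropyDrop, entropyGap, orbitAvg_eq_expect_of_transitive hσ]

lemma sum_sq_sqrt_sub_sqrt_orbitAvg_le_entropyDrop (hφ : ∀ x, 0 ≤ φ x) :
    ∑ x, (√(φ x) - √(orbitAvg σ φ x)) ^ 2 ≤ entropyDrop σ φ := by
  rw [entropyDrop_eq_sum]
  exact sum_le_sum fun x _ => sq_sqrt_sub_sqrt_le_mul_log_sub (hφ x) (orbitAvg_nonneg hφ x)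
    (eq_zero_of_orbitAvg_eq_zero hφ)

lemma entropyDrop_nonneg (hφ : ∀ x, 0 ≤ φ x) : 0 ≤ entropyDrop σ φ :=
  (sum_nonneg fun _ _ => sq_nonneg _).trans (sum_sq_sqrt_sub_sqrt_orbitAvg_le_entropyDrop hφ)

lemma hellingerShift_le_entropyDrop (hφ : ∀ x, 0 ≤ φ x) (b : G) :
    hellingerShift φ (σ b) ≤ 4 * entropyDrop σ φ := by
  have hdrop := sum_sq_sqrt_sub_sqrt_orbitAvg_le_entropyDrop (σ := σ) hφ
  have hshift : ∑ x, (√(φ (σ b x)) - √(orbitAvg σ φ x)) ^ 2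
      = ∑ x, (√(φ x) - √(orbitAvg σ φ x)) ^ 2 := by
    rw [← Equiv.sum_comp (σ b) fun x => (√(φ x) - √(orbitAvg σ φ x)) ^ 2]
    simp only [orbitAvg_apply_perm]
  have htriangle : hellingerShift φ (σ b) ≤ 2 * ∑ x, (√(φ (σ b x)) - √(orbitAvg σ φ x)) ^ 2
      + 2 * ∑ x, (√(φ x) - √(orbitAvg σ φ x)) ^ 2 := by
    rw [hellingerShift, mul_sum, mul_sum, ← sum_add_distrib]
    refine sum_le_sum fun x _ => ?_
    nlinarith [sq_nonneg ((√(φ (σ b x)) - √(orbitAvg σ φ x)) + (√(φ x) - √(orbitAvg σ φ x)))]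
  linarith

lemma entropyDrop_le_sum_hellingerShift (hφ : ∀ x, 0 ≤ φ x) :
    entropyDrop σ φ ≤ 4 * ∑ a, hellingerShift φ (σ a) := by
  unfold hellingerShift
  rw [entropyDrop_eq_sum, sum_comm, mul_sum]
  exact sum_le_sum fun x _ => (mul_log_sub_le_sq_div (hφ x) (orbitAvg_nonneg hφ x)
    (eq_zero_of_orbitAvg_eq_zero hφ)).trans (sq_sub_orbitAvg_div_le hφ x)

lemma negEntropy_orbitAvg_orbitAvg (hστ : ∀ a b, Commute (σ a) (τ b)) (φ : X → ℝ) :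
    negEntropy (orbitAvg σ (orbitAvg τ φ)) =
      ∑ x, φ x * Real.log (orbitAvg σ (orbitAvg τ φ) x) := by
  rw [negEntropy_orbitAvg]
  refine sum_orbitAvg_mul (fun b x => ?_) φ
  rw [orbitAvg_invariant_of_commute hστ fun b x => orbitAvg_apply_perm φ b x]

lemma sum_orbitAvg_mul_orbitAvg_div (hστ : ∀ a b, Commute (σ a) (τ b)) (hφ : ∀ x, 0 ≤ φ x) :
    ∑ x, orbitAvg σ φ x * orbitAvg τ φ x / orbitAvg σ (orbitAvg τ φ) x = ∑ x, φ x := by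
  have hτ : ∀ b x, orbitAvg τ φ (τ b x) = orbitAvg τ φ x := orbitAvg_apply_perm φ
  have hστinv := orbitAvg_invariant_of_commute hστ hτ
  simp only [mul_div_assoc]
  rw [← sum_orbitAvg_mul (σ := τ) (fun b x => by rw [hτ, hστinv]), ← sum_orbitAvg (σ := τ) φ]
  refine sum_congr rfl fun x _ => ?_
  rw [← orbitAvg_comm hστ]
  by_cases hx : orbitAvg σ (orbitAvg τ φ) x = 0
  · rw [hx, zero_mul, eq_zero_of_orbitAvg_eq_zero (orbitAvg_nonneg hφ) hx]
  · rw [mul_div_cancel₀ _ hx]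

/-- Strong subadditivity of entropy. -/
lemma entropyDrop_orbitAvg_le (hστ : ∀ a b, Commute (σ a) (τ b)) (hφ : ∀ x, 0 ≤ φ x) :
    entropyDrop σ (orbitAvg τ φ) ≤ entropyDrop σ φ := by
  have hσ0 := orbitAvg_nonneg (σ := σ) hφ
  have hτ0 := orbitAvg_nonneg (σ := τ) hφ
  have hστ0 := orbitAvg_nonneg (σ := σ) hτ0
  have hpoint : ∀ x, φ x - orbitAvg σ φ x * orbitAvg τ φ x / orbitAvg σ (orbitAvg τ φ) x ≤
      φ x * Real.log (φ x) + φ x * Real.log (orbitAvg σ (orbitAvg τ φ) x)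
        - φ x * Real.log (orbitAvg σ φ x) - φ x * Real.log (orbitAvg τ φ x) := by
    intro x
    rcases (hφ x).eq_or_lt with hx | hx
    · have := div_nonneg (mul_nonneg (hσ0 x) (hτ0 x)) (hστ0 x)
      simpa [← hx] using this
    have hσx : orbitAvg σ φ x ≠ 0 := fun h => hx.ne' (eq_zero_of_orbitAvg_eq_zero hφ h)
    have hτx : orbitAvg τ φ x ≠ 0 := fun h => hx.ne' (eq_zero_of_orbitAvg_eq_zero hφ h)
    have hστx : orbitAvg σ (orbitAvg τ φ) x ≠ 0 := fun h =>
      hτx (eq_zero_of_orbitAvg_eq_zero hτ0 h)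
    have hlog := sub_le_mul_log_sub (b := orbitAvg σ φ x * orbitAvg τ φ x /
      orbitAvg σ (orbitAvg τ φ) x) (hφ x) (div_nonneg (mul_nonneg (hσ0 x) (hτ0 x)) (hστ0 x))
      fun h => absurd h (div_ne_zero (mul_ne_zero hσx hτx) hστx)
    rw [Real.log_div (mul_ne_zero hσx hτx) hστx, Real.log_mul hσx hτx] at hlog
    linarith
  have hsum := sum_le_sum fun x (_ : x ∈ univ) => hpoint x
  simp only [sum_sub_distrib, sum_add_distrib] at hsum
  rw [sum_orbitAvg_mul_orbitAvg_div hστ hφ, ← negEntropy_orbitAvg, ← negEntropy_orbitAvg,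
    ← negEntropy_orbitAvg_orbitAvg hστ] at hsum
  unfold entropyDrop
  linarith [show negEntropy φ = ∑ x, φ x * Real.log (φ x) from rfl]

end EntropyDrop

section Tensorization

variable {X G J : Type*} [Group G] [Fintype G] {σ : J → G →* Equiv.Perm X} {φ : X → ℝ}

/-- The result of averaging `φ` over the orbits of `σ j` successively for all `j` in `l`. -/
def iteratedAvg (σ : J → G →* Equiv.Perm X) (φ : X → ℝ) (l : List J) : X → ℝ :=
  l.foldr (fun j f => orbitAvg (σ j) f) φ

lemma iteratedAvg_nonneg (hφ : ∀ x, 0 ≤ φ x) (l : List J) (x : X) : 0 ≤ iteratedAvg σ φ l x := by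
  induction l generalizing x with
  | nil => exact hφ x
  | cons k l ih => exact orbitAvg_nonneg ih x

lemma iteratedAvg_invariant (hσ : ∀ j k, j ≠ k → ∀ a b, Commute (σ j a) (σ k b)) {l : List J}
    {j : J} (hj : j ∈ l) (b : G) (x : X) :
    iteratedAvg σ φ l (σ j b x) = iteratedAvg σ φ l x := by
  induction l generalizing b x with
  | nil => simp at hj
  | cons k l ih =>
    by_cases hjk : j = k
    · subst hjk
      exact orbitAvg_apply_perm _ b x
    · exact orbitAvg_invariant_of_commute (hσ k j (Ne.symm hjk))
        (ih (List.mem_of_ne_of_mem hjk hj)) b x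

variable [Fintype X]

lemma sum_iteratedAvg (φ : X → ℝ) (l : List J) : ∑ x, iteratedAvg σ φ l x = ∑ x, φ x := by
  induction l with
  | nil => rfl
  | cons k l ih => exact (sum_orbitAvg _).trans ih

lemma entropyDrop_iteratedAvg_le (hσ : ∀ j k, j ≠ k → ∀ a b, Commute (σ j a) (σ k b))
    (hφ : ∀ x, 0 ≤ φ x) {l : List J} {j : J} (hj : j ∉ l) :
    entropyDrop (σ j) (iteratedAvg σ φ l) ≤ entropyDrop (σ j) φ := by
  induction l with
  | nil => exact le_rfl
  | cons k l ih =>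
    rw [List.mem_cons, not_or] at hj
    exact (entropyDrop_orbitAvg_le (hσ j k hj.1) (iteratedAvg_nonneg hφ l)).trans (ih hj.2)

lemma negEntropy_sub_iteratedAvg_le (hσ : ∀ j k, j ≠ k → ∀ a b, Commute (σ j a) (σ k b))
    (hφ : ∀ x, 0 ≤ φ x) {l : List J} (hl : l.Nodup) :
    negEntropy φ - negEntropy (iteratedAvg σ φ l) ≤
      (l.map fun j => entropyDrop (σ j) φ).sum := by
  induction l with
  | nil => simp [iteratedAvg]
  | cons k l ih =>
    rw [List.nodup_cons] at hl
    have hk := entropyDrop_iteratedAvg_le hσ hφ hl.1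
    rw [List.map_cons, List.sum_cons]
    have hcons : negEntropy (iteratedAvg σ φ (k :: l)) =
      negEntropy (iteratedAvg σ φ l) - entropyDrop (σ k) (iteratedAvg σ φ l) := by
      rw [entropyDrop, sub_sub_cancel]; rfl
    linarith [ih hl.2]

lemma entropyGap_le_sum_entropyDrop [Fintype J]
    (hσ : ∀ j k, j ≠ k → ∀ a b, Commute (σ j a) (σ k b))
    (htrans : ∀ F : X → ℝ, (∀ j a x, F (σ j a x) = F x) → ∀ x y, F x = F y)
    (hφ : ∀ x, 0 ≤ φ x) : entropyGap φ ≤ ∑ j, entropyDrop (σ j) φ := by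
  set F := iteratedAvg σ φ univ.toList
  have hF : F = fun _ => 𝔼 y, φ y := by
    funext x
    rw [eq_expect_of_forall_eq (F := F) _ x, Fintype.expect_eq_sum_div_card,
      Fintype.expect_eq_sum_div_card, sum_iteratedAvg]
    exact htrans F fun j => iteratedAvg_invariant hσ (mem_toList.2 (mem_univ j))
  rw [entropyGap, ← hF, ← sum_map_toList]
  exact negEntropy_sub_iteratedAvg_le hσ hφ (nodup_toList _)

end Tensorization

section Mass

variable {X ι : Type*} [Fintype X] {q : X → ℝ}

/-- The mass `q(E)` that the density `q` gives to the event `E`. -/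
def mass (q : X → ℝ) (E : Set X) : ℝ := ∑ x, E.indicator q x

lemma mass_mono (hq : ∀ x, 0 ≤ q x) {E F : Set X} (hEF : E ⊆ F) : mass q E ≤ mass q F :=
  sum_le_sum fun x _ => Set.indicator_le_indicator_of_subset hEF hq x

lemma mass_biUnion_le (hq : ∀ x, 0 ≤ q x) (s : Finset ι) (E : ι → Set X) :
    mass q (⋃ i ∈ s, E i) ≤ ∑ i ∈ s, mass q (E i) := by
  unfold mass
  rw [sum_comm]
  refine sum_le_sum fun x _ => ?_
  by_cases hx : x ∈ ⋃ i ∈ s, E i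
  · obtain ⟨i, hi, hxi⟩ := Set.mem_iUnion₂.1 hx
    rw [Set.indicator_of_mem hx]
    exact (Set.indicator_of_mem hxi q).ge.trans
      (single_le_sum (fun j _ => Set.indicator_nonneg (fun y _ => hq y) x) hi)
  · rw [Set.indicator_of_notMem hx]
    exact sum_nonneg fun j _ => Set.indicator_nonneg (fun y _ => hq y) x

lemma mul_mass_le_sum_mul {V : X → ℝ} {E : Set X} {c : ℝ} (hq : ∀ x, 0 ≤ q x) (hV : ∀ x, 0 ≤ V x)
    (hE : ∀ x ∈ E, q x ≠ 0 → c ≤ V x) : c * mass q E ≤ ∑ x, q x * V x := by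
  unfold mass
  rw [mul_sum]
  refine sum_le_sum fun x _ => ?_
  by_cases hx : x ∈ E
  · rw [Set.indicator_of_mem hx, mul_comm]
    rcases eq_or_ne (q x) 0 with h0 | h0
    · rw [h0, zero_mul, zero_mul]
    · exact mul_le_mul_of_nonneg_left (hE x hx h0) (hq x)
  · rw [Set.indicator_of_notMem hx, mul_zero]
    exact mul_nonneg (hq x) (hV x)

end Mass

section MarkovChain

variable {X : Type*} [Fintype X] {Q : Matrix X X ℝ}

lemma mulVec_indicator_one (Q : Matrix X X ℝ) (E : Set X) (u : X) :
    (Q *ᵥ E.indicator 1) u = mass (Q u) E := by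
  refine sum_congr rfl fun x _ => ?_
  by_cases hx : x ∈ E <;> simp [hx]

variable [DecidableEq X]

lemma pow_mulVec_le_of_mulVec_le (hQ : Q ∈ Matrix.rowStochastic ℝ X) {V : X → ℝ} {A c : ℝ}
    (hA : 0 ≤ A) (hV : ∀ x, (Q *ᵥ V) x ≤ A * V x + c) (t : ℕ) (x : X) :
    (Q ^ t *ᵥ V) x ≤ A ^ t * V x + c * ∑ s ∈ range t, A ^ s := by
  induction t generalizing x with
  | zero => simp
  | succ t ih =>
    have hrow : ∑ y, Q x y = 1 := Matrix.sum_row_of_mem_rowStochastic hQ x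
    calc (Q ^ (t + 1) *ᵥ V) x = ∑ y, Q x y * (Q ^ t *ᵥ V) y := by
          rw [pow_succ', ← Matrix.mulVec_mulVec]; rfl
      _ ≤ ∑ y, Q x y * (A ^ t * V y + c * ∑ s ∈ range t, A ^ s) :=
          sum_le_sum fun y _ =>
            mul_le_mul_of_nonneg_left (ih y) (Matrix.nonneg_of_mem_rowStochastic hQ)
      _ = A ^ t * (Q *ᵥ V) x + c * ∑ s ∈ range t, A ^ s := by
          simp only [mul_add, sum_add_distrib, ← sum_mul, hrow, one_mul]
          simp only [Matrix.mulVec, dotProduct, mul_sum, mul_left_comm]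
      _ ≤ A ^ t * (A * V x + c) + c * ∑ s ∈ range t, A ^ s := by
          gcongr; exact hV x
      _ = A ^ (t + 1) * V x + c * ∑ s ∈ range (t + 1), A ^ s := by
          rw [sum_range_succ]; ring

lemma pow_mulVec_le_exp_mul_add (hQ : Q ∈ Matrix.rowStochastic ℝ X) {V : X → ℝ} {θ c : ℝ}
    (hθ0 : 0 < θ) (hθ1 : θ ≤ 1) (hc : 0 ≤ c) (hV0 : ∀ x, 0 ≤ V x)
    (hV : ∀ x, (Q *ᵥ V) x ≤ (1 - θ) * V x + c) (t : ℕ) (x : X) :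
    (Q ^ t *ᵥ V) x ≤ Real.exp (-(θ * t)) * V x + c / θ := by
  have hgeom : ∑ s ∈ range t, (1 - θ) ^ s ≤ 1 / θ :=
    (le_div_iff₀' hθ0).2 (mul_geom_sum_one_sub_le_one hθ1 t)
  calc (Q ^ t *ᵥ V) x ≤ (1 - θ) ^ t * V x + c * ∑ s ∈ range t, (1 - θ) ^ s :=
        pow_mulVec_le_of_mulVec_le hQ (sub_nonneg.2 hθ1) hV t x
    _ ≤ Real.exp (-(θ * t)) * V x + c * (1 / θ) := by
        gcongr
        · exact hV0 x
        · exact one_sub_pow_le_exp_neg hθ1 t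
    _ = Real.exp (-(θ * t)) * V x + c / θ := by rw [mul_one_div]

lemma sum_abs_mul_sub_le {Q' : Matrix X X ℝ} (hQ : Q ∈ Matrix.rowStochastic ℝ X)
    (hQ' : Q' ∈ Matrix.rowStochastic ℝ X) {ν : X → ℝ} (hν : ∀ w, 0 ≤ ν w) (hν1 : ∑ w, ν w = 1)
    {E : Set X} {a : ℝ} (ha : 0 ≤ a) (hE : ∀ y ∉ E, ∑ w, |Q' y w - ν w| ≤ a) (u : X) :
    ∑ w, |(Q * Q') u w - ν w| ≤ a + 2 * mass (Q u) E := by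
  have hrow : ∑ y, Q u y = 1 := Matrix.sum_row_of_mem_rowStochastic hQ u
  have hdist : ∀ y, ∑ w, |Q' y w - ν w| ≤ a + 2 * E.indicator 1 y := by
    intro y
    by_cases hy : y ∈ E
    · calc ∑ w, |Q' y w - ν w| ≤ ∑ w, (Q' y w + ν w) := sum_le_sum fun w _ =>
            (abs_sub _ _).trans_eq (by
              rw [abs_of_nonneg (Matrix.nonneg_of_mem_rowStochastic hQ'), abs_of_nonneg (hν w)])
        _ ≤ a + 2 * E.indicator 1 y := by
            rw [sum_add_distrib, Matrix.sum_row_of_mem_rowStochastic hQ', hν1,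
              Set.indicator_of_mem hy, Pi.one_apply]
            linarith
    · simpa [hy] using hE y hy
  calc ∑ w, |(Q * Q') u w - ν w| = ∑ w, |∑ y, Q u y * (Q' y w - ν w)| := by
        simp only [mul_sub, sum_sub_distrib, ← sum_mul, hrow, one_mul, Matrix.mul_apply]
    _ ≤ ∑ w, ∑ y, Q u y * |Q' y w - ν w| := by
        refine sum_le_sum fun w _ => (abs_sum_le_sum_abs _ _).trans_eq ?_
        simp only [abs_mul, abs_of_nonneg (Matrix.nonneg_of_mem_rowStochastic hQ)]
    _ = ∑ y, Q u y * ∑ w, |Q' y w - ν w| := by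
        rw [sum_comm]; simp only [mul_sum]
    _ ≤ ∑ y, Q u y * (a + 2 * E.indicator 1 y) := sum_le_sum fun y _ =>
        mul_le_mul_of_nonneg_left (hdist y) (Matrix.nonneg_of_mem_rowStochastic hQ)
    _ = a + 2 * mass (Q u) E := by
        rw [← mulVec_indicator_one]
        simp only [mul_add, sum_add_distrib, ← sum_mul, hrow, one_mul, mul_left_comm _ (2 : ℝ),
          ← mul_sum, Matrix.mulVec, dotProduct]

/-- A set of states that the chain with transition matrix `Q` never leaves. -/
def IsAbsorbing {X : Type*} (Q : Matrix X X ℝ) (S : Set X) : Prop := ∀ u ∈ S, ∀ w ∉ S, Q u w = 0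

variable {S : Set X}

lemma IsAbsorbing.pow (hS : IsAbsorbing Q S) (t : ℕ) : IsAbsorbing (Q ^ t) S := by
  induction t with
  | zero =>
    intro u hu w hw
    rw [pow_zero, Matrix.one_apply_ne]
    rintro rfl
    exact hw hu
  | succ t ih =>
    intro u hu w hw
    rw [pow_succ, Matrix.mul_apply]
    refine sum_eq_zero fun v _ => ?_
    by_cases hv : v ∈ S
    · rw [hS v hv w hw, mul_zero]
    · rw [ih u hu v hv, zero_mul]

lemma mulVec_sub_const (hQ : Q ∈ Matrix.rowStochastic ℝ X) (F : X → ℝ) (m : ℝ) (u : X) :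
    (Q *ᵥ F) u - m = ∑ w, Q u w * (F w - m) := by
  simp only [mul_sub, sum_sub_distrib, ← sum_mul, Matrix.sum_row_of_mem_rowStochastic hQ, one_mul,
    Matrix.mulVec, dotProduct]

lemma abs_mulVec_sub_le (hQ : Q ∈ Matrix.rowStochastic ℝ X) (hS : IsAbsorbing Q S) {F : X → ℝ}
    {m d : ℝ} (hF : ∀ u ∈ S, |F u - m| ≤ d) : ∀ u ∈ S, |(Q *ᵥ F) u - m| ≤ d := by
  intro u hu
  rw [mulVec_sub_const hQ]
  calc |∑ w, Q u w * (F w - m)| ≤ ∑ w, |Q u w * (F w - m)| := abs_sum_le_sum_abs _ _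
    _ ≤ ∑ w, Q u w * d := by
      refine sum_le_sum fun w _ => ?_
      rw [abs_mul, abs_of_nonneg (Matrix.nonneg_of_mem_rowStochastic hQ)]
      by_cases hw : w ∈ S
      · exact mul_le_mul_of_nonneg_left (hF w hw) (Matrix.nonneg_of_mem_rowStochastic hQ)
      · rw [hS u hu w hw, zero_mul, zero_mul]
    _ = d := by rw [← sum_mul, Matrix.sum_row_of_mem_rowStochastic hQ, one_mul]

lemma exists_abs_mulVec_sub_le_half (hQ : Q ∈ Matrix.rowStochastic ℝ X) (hS : IsAbsorbing Q S)
    {ν : X → ℝ} (hν : ∀ u ∈ S, ∑ w, |Q u w - ν w| ≤ 1 / 2) {F : X → ℝ} {m d : ℝ} (hd : 0 ≤ d)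
    (hF : ∀ u ∈ S, |F u - m| ≤ d) : ∃ m', ∀ u ∈ S, |(Q *ᵥ F) u - m'| ≤ d / 2 := by
  refine ⟨m + ∑ w, S.indicator (fun w => ν w * (F w - m)) w, fun u hu => ?_⟩
  rw [← sub_sub, mulVec_sub_const hQ, ← sum_sub_distrib]
  calc |∑ w, (Q u w * (F w - m) - S.indicator (fun w => ν w * (F w - m)) w)|
      ≤ ∑ w, |Q u w * (F w - m) - S.indicator (fun w => ν w * (F w - m)) w| :=
        abs_sum_le_sum_abs _ _
    _ ≤ ∑ w, |Q u w - ν w| * d := by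
      refine sum_le_sum fun w _ => ?_
      by_cases hw : w ∈ S
      · rw [Set.indicator_of_mem hw, ← sub_mul, abs_mul]
        exact mul_le_mul_of_nonneg_left (hF w hw) (abs_nonneg _)
      · rw [Set.indicator_of_notMem hw, hS u hu w hw, zero_mul, sub_zero, abs_zero]
        positivity
    _ ≤ d / 2 := by
      rw [← sum_mul, div_eq_mul_one_div, mul_comm]
      exact mul_le_mul_of_nonneg_left (hν u hu) hd

lemma exists_abs_pow_mul_mulVec_sub_le (hQ : Q ∈ Matrix.rowStochastic ℝ X) (hS : IsAbsorbing Q S)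
    {ν : X → ℝ} {T : ℕ} (hν : ∀ u ∈ S, ∑ w, |(Q ^ T) u w - ν w| ≤ 1 / 2) {F : X → ℝ}
    (hF0 : ∀ u, 0 ≤ F u) (hF1 : ∀ u, F u ≤ 1) (k : ℕ) :
    ∃ m, ∀ u ∈ S, |(Q ^ (k * T) *ᵥ F) u - m| ≤ (1 / 2) ^ (k + 1) := by
  induction k with
  | zero =>
    refine ⟨1 / 2, fun u _ => ?_⟩
    rw [zero_mul, pow_zero, Matrix.one_mulVec, abs_le]
    constructor <;> linarith [hF0 u, hF1 u]
  | succ k ih =>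
    obtain ⟨m, hm⟩ := ih
    obtain ⟨m', hm'⟩ :=
      exists_abs_mulVec_sub_le_half (pow_mem hQ T) (hS.pow T) hν (by positivity) hm
    refine ⟨m', fun u hu => ?_⟩
    rw [add_mul, one_mul, add_comm, pow_add, ← Matrix.mulVec_mulVec, pow_succ, ← div_eq_mul_one_div]
    exact hm' u hu

lemma pow_mulVec_le_of_mixing (hQ : Q ∈ doublyStochastic ℝ X) (hS : IsAbsorbing Q S)
    (hcard : Fintype.card X ≤ 2 * S.ncard) {ν : X → ℝ} {T : ℕ}
    (hν : ∀ u ∈ S, ∑ w, |(Q ^ T) u w - ν w| ≤ 1 / 2) {F : X → ℝ} (hF0 : ∀ u, 0 ≤ F u)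
    (hF1 : ∀ u, F u ≤ 1) {k t : ℕ} (ht : k * T ≤ t) {u : X} (hu : u ∈ S) :
    (Q ^ t *ᵥ F) u ≤ 2 * 𝔼 w, F w + (1 / 2) ^ k := by
  classical
  have hrow : Q ∈ Matrix.rowStochastic ℝ X :=
    (mem_doublyStochastic_iff_mem_rowStochastic_and_mem_colStochastic.1 hQ).1
  obtain ⟨m, hm⟩ := exists_abs_pow_mul_mulVec_sub_le hrow hS hν hF0 hF1 k
  have hosc := abs_mulVec_sub_le (pow_mem hrow (t - k * T)) (hS.pow _) hm
  rw [Matrix.mulVec_mulVec, ← pow_add, Nat.sub_add_cancel ht] at hosc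
  set d : ℝ := (1 / 2) ^ (k + 1) with hd
  have hlower : S.ncard * (m - d) ≤ ∑ w, F w := by
    calc S.ncard * (m - d) = ∑ w with w ∈ S, (m - d) := by
          rw [sum_const, nsmul_eq_mul, Set.ncard_eq_toFinset_card', Set.toFinset_card,
            Fintype.card_subtype]
      _ ≤ ∑ w with w ∈ S, (Q ^ t *ᵥ F) w :=
          sum_le_sum fun w hw => by linarith [(abs_le.1 (hosc w (mem_filter.1 hw).2)).1]
      _ ≤ ∑ w, (Q ^ t *ᵥ F) w :=
          sum_le_sum_of_subset_of_nonneg (filter_subset _ _) fun w _ _ =>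
            sum_nonneg fun y _ => mul_nonneg (nonneg_of_mem_doublyStochastic (pow_mem hQ t)) (hF0 y)
      _ = ∑ w, F w := sum_mulVec_of_mem_doublyStochastic (pow_mem hQ t)
  have hX : (0 : ℝ) < Fintype.card X := by exact_mod_cast Fintype.card_pos_iff.2 ⟨u⟩
  have hcard' : (Fintype.card X : ℝ) ≤ 2 * S.ncard := by exact_mod_cast hcard
  have hF : 0 ≤ ∑ w, F w := sum_nonneg fun w _ => hF0 w
  have hmean : m - d ≤ 2 * 𝔼 w, F w := by
    rw [Fintype.expect_eq_sum_div_card, ← mul_div_assoc, le_div_iff₀ hX]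
    rcases le_total (m - d) 0 with h | h <;> nlinarith
  have hpow : (1 / 2 : ℝ) ^ k = 2 * d := by rw [hd, pow_succ]; ring
  linarith [(abs_le.1 (hosc u hu)).2]

end MarkovChain

section TotalVariation

variable {X : Type*} [Fintype X] {S : Set X}

lemma sum_unifOn (hS : S.Nonempty) : ∑ x, unifOn S x = 1 := by
  classical
  have := hS.to_subtype
  have hcard : (Nat.card S : ℝ) ≠ 0 := by exact_mod_cast Nat.card_pos.ne'
  unfold unifOn
  rw [← sum_filter, sum_const, nsmul_eq_mul, ← Fintype.card_subtype, ← Nat.card_eq_fintype_card]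
  exact mul_inv_cancel₀ hcard

lemma inv_card_le_inv_card (hS : S.Nonempty) : (Fintype.card X : ℝ)⁻¹ ≤ (Nat.card S : ℝ)⁻¹ := by
  have := hS.to_subtype
  refine inv_anti₀ (by exact_mod_cast Nat.card_pos) ?_
  exact_mod_cast (Finite.card_subtype_le _).trans_eq Nat.card_eq_fintype_card

-- The two uniform densities differ by twice the uniform mass of the complement of `S`, which `q`
-- misses and which is therefore already counted on the right.
lemma tvDist_unifOn_le {q : X → ℝ} (hS : S.Nonempty) (hq1 : ∑ x, q x = 1)
    (hq : ∀ x ∉ S, q x = 0) :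
    tvDist q (unifOn S) ≤ ∑ x, |q x - (Fintype.card X : ℝ)⁻¹| := by
  set c : ℝ := (Fintype.card X : ℝ)⁻¹
  have hc1 : ∑ _x : X, c = 1 := by
    obtain ⟨x, -⟩ := hS
    have : (Fintype.card X : ℝ) ≠ 0 := by exact_mod_cast (Fintype.card_pos_iff.2 ⟨x⟩).ne'
    rw [sum_const, card_univ, nsmul_eq_mul, mul_inv_cancel₀ this]
  have hpointwise : ∀ x, |c - unifOn S x| + (c - unifOn S x) ≤ |q x - c| - (q x - c) := by
    intro x
    by_cases hx : x ∈ S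
    · have hle : c - unifOn S x ≤ 0 := by
        simpa only [unifOn, if_pos hx, sub_nonpos] using inv_card_le_inv_card hS
      rw [abs_of_nonpos hle]
      linarith [le_abs_self (q x - c)]
    · rw [unifOn, if_neg hx, hq x hx, zero_sub, abs_neg, sub_zero]
      linarith
  have hsum := sum_le_sum fun x (_ : x ∈ univ) => hpointwise x
  rw [sum_add_distrib, sum_sub_distrib, sum_sub_distrib, sum_sub_distrib, sum_unifOn hS, hc1,
    hq1] at hsum
  have htriangle : ∑ x, |q x - unifOn S x| ≤ ∑ x, |q x - c| + ∑ x, |c - unifOn S x| := by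
    rw [← sum_add_distrib]
    exact sum_le_sum fun x _ => abs_sub_le _ _ _
  unfold tvDist
  linarith

end TotalVariation

section LazyKernel

variable {X G K : Type*} [DecidableEq X] [Group G] [Fintype G] [Fintype K]

/-- The transition matrix of the walk that stays put with probability `1/2` and otherwise applies
`σ k a` with `k` and `a` uniform and independent. -/
def lazyKernel (σ : K → G →* Equiv.Perm X) : Matrix X X ℝ :=
  Matrix.of fun x y =>
    ((if x = y then 1 else 0) + 𝔼 k, 𝔼 a, if σ k a x = y then (1 : ℝ) else 0) / 2

variable {σ : K → G →* Equiv.Perm X}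

lemma lazyKernel_isSymm (σ : K → G →* Equiv.Perm X) : (lazyKernel σ).IsSymm := by
  refine Matrix.IsSymm.ext fun x y => ?_
  have hinv : ∀ k, (𝔼 a, if σ k a y = x then (1 : ℝ) else 0) =
      𝔼 a, if σ k a x = y then (1 : ℝ) else 0 := fun k =>
    Fintype.expect_equiv (Equiv.inv G) _ _ fun a => by
      simp only [Equiv.inv_apply, map_inv, Equiv.Perm.inv_eq_iff_eq, eq_comm (a := x)]
  simp only [lazyKernel, Matrix.of_apply, hinv, eq_comm (a := y)]

lemma isAbsorbing_lazyKernel {S : Set X} (hS : ∀ k a x, σ k a x ∈ S → x ∈ S) :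
    IsAbsorbing (lazyKernel σ) S := by
  intro u hu w hw
  have hne : ∀ k a, σ k a u ≠ w := by
    rintro k a rfl
    refine hw (hS k a⁻¹ _ ?_)
    rwa [map_inv, Equiv.Perm.coe_inv, Equiv.symm_apply_apply]
  have huw : u ≠ w := fun h => hw (h ▸ hu)
  simp only [lazyKernel, Matrix.of_apply, hne, huw, if_false, expect_const_zero, add_zero, zero_div]

variable [Fintype X]

lemma lazyKernel_mulVec (f : X → ℝ) (x : X) :
    (lazyKernel σ *ᵥ f) x = (f x + 𝔼 k, orbitAvg (σ k) f x) / 2 := by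
  simp only [Matrix.mulVec, dotProduct, lazyKernel, Matrix.of_apply, div_mul_eq_mul_div, ← sum_div,
    add_mul, sum_add_distrib, expect_mul, ite_mul, one_mul, zero_mul, ← expect_sum_comm, sum_ite_eq,
    mem_univ, if_true, orbitAvg]

lemma lazyKernel_mem_doublyStochastic [Nonempty K] : lazyKernel σ ∈ doublyStochastic ℝ X := by
  have hone : lazyKernel σ *ᵥ 1 = 1 := by
    funext x
    simp [lazyKernel_mulVec, orbitAvg]
  refine mem_doublyStochastic.2 ⟨fun x y => ?_, hone, ?_⟩
  · refine div_nonneg (add_nonneg ?_ ?_) zero_le_two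
    · split_ifs <;> norm_num
    · exact expect_nonneg fun k _ => expect_nonneg fun a _ => by split_ifs <;> norm_num
  · rw [← Matrix.mulVec_transpose, lazyKernel_isSymm, hone]

lemma lazyKernel_pow_succ_row (t : ℕ) (x : X) :
    (lazyKernel σ ^ (t + 1)) x = lazyKernel σ *ᵥ (lazyKernel σ ^ t) x := by
  funext y
  rw [pow_succ, Matrix.mul_apply, Matrix.mulVec, dotProduct]
  refine sum_congr rfl fun z _ => ?_
  rw [mul_comm, (lazyKernel_isSymm σ).apply]

lemma entropyGap_lazyKernel_mulVec_le [Nonempty K] {f : X → ℝ} (hf : ∀ x, 0 ≤ f x) :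
    entropyGap (lazyKernel σ *ᵥ f) ≤ entropyGap f - (𝔼 k, entropyDrop (σ k) f) / 2 := by
  have hmean : 𝔼 x, (lazyKernel σ *ᵥ f) x = 𝔼 x, f x := by
    simp only [Fintype.expect_eq_sum_div_card,
      sum_mulVec_of_mem_doublyStochastic lazyKernel_mem_doublyStochastic]
  have hstep : negEntropy (lazyKernel σ *ᵥ f) =
      negEntropy fun x => (f x + 𝔼 k, orbitAvg (σ k) f x) / 2 :=
    congrArg negEntropy (funext (lazyKernel_mulVec f))
  have hdrop : 𝔼 k, entropyDrop (σ k) f = negEntropy f - 𝔼 k, negEntropy (orbitAvg (σ k) f) := by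
    simp only [entropyDrop, expect_sub_distrib, Fintype.expect_const]
  have hhalf := negEntropy_half_add_le (g := fun x => 𝔼 k, orbitAvg (σ k) f x) hf fun x =>
    expect_nonneg fun k _ => orbitAvg_nonneg hf x
  have hjensen := negEntropy_expect_le fun k x => orbitAvg_nonneg (σ := σ k) hf x
  rw [entropyGap, entropyGap, hmean, hstep, hdrop]
  linarith

end LazyKernel

/-- A group action given by a family of maps, as a homomorphism into the permutations. -/
def permHom {G X : Type*} [Group G] (f : G → X → X) (hone : ∀ x, f 1 x = x)
    (hmul : ∀ a b x, f (a * b) x = f a (f b x)) : G →* Equiv.Perm X :=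
  MonoidHom.toHomPerm
    { toFun := f, map_one' := funext hone, map_mul' := fun a b => funext (hmul a b) }

section Coordinates

variable {ι H G : Type*} [DecidableEq ι]

/-- Left multiplication of the `i`-th coordinate. -/
def coordMul [Group H] (i : ι) : H →* Equiv.Perm (ι → H) :=
  permHom (fun a g => Function.update g i (a * g i)) (fun g => by simp)
    (fun a b g => by simp [mul_assoc])

lemma coordMul_apply [Group H] (i : ι) (a : H) (g : ι → H) :
    coordMul i a g = Function.update g i (a * g i) := rfl

lemma commute_coordMul [Group H] {i j : ι} (hij : i ≠ j) (a b : H) :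
    Commute (coordMul i a) (coordMul j b) := by
  ext1 g
  simp only [Equiv.Perm.mul_apply, coordMul_apply]
  rw [Function.update_of_ne hij, Function.update_of_ne hij.symm, Function.update_comm hij]

lemma eq_of_update_invariant [Finite ι] {F : (ι → H) → ℝ}
    (hF : ∀ i x g, F (Function.update g i x) = F g) (g g' : ι → H) : F g = F g' := by
  have := Fintype.ofFinite ι
  have hpiecewise : ∀ s : Finset ι, F (s.piecewise g g') = F g' := by
    intro s
    induction s using Finset.induction_on with
    | empty => rw [piecewise_empty]
    | insert i s _ ih => rw [piecewise_insert, hF, ih]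
  simpa only [piecewise_univ] using hpiecewise univ

variable [Fintype ι] [Fintype H]

lemma entropyGap_le_sum_entropyDrop_coordMul [Group H] {q : (ι → H) → ℝ} (hq : ∀ g, 0 ≤ q g) :
    entropyGap q ≤ ∑ i, entropyDrop (coordMul i) q := by
  refine entropyGap_le_sum_entropyDrop (fun i j hij a b => commute_coordMul hij a b)
    (fun F hF => eq_of_update_invariant fun i x g => ?_) hq
  have hx : coordMul i (x * (g i)⁻¹) g = Function.update g i x := by
    rw [coordMul_apply, inv_mul_cancel_right]
  rw [← hx, hF]

-- `(g, x) ↦ (update g i x, g i)` is an involution.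
lemma sum_sum_update (i : ι) (F : (ι → H) → ℝ) :
    ∑ g : ι → H, ∑ x, F (Function.update g i x) = Fintype.card H * ∑ g, F g := by
  have hswap : Function.Involutive fun y : (ι → H) × H => (Function.update y.1 i y.2, y.1 i) :=
    fun y => by simp
  calc ∑ g : ι → H, ∑ x, F (Function.update g i x)
      = ∑ y : (ι → H) × H, F (Function.update y.1 i y.2) := by rw [Fintype.sum_prod_type]
    _ = ∑ y : (ι → H) × H, F y.1 := Equiv.sum_comp hswap.toPerm fun y => F y.1
    _ = Fintype.card H * ∑ g, F g := by
      simp only [Fintype.sum_prod_type, sum_const, card_univ, nsmul_eq_mul, mul_sum]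

lemma sum_entropyDrop_update [Group G] [Fintype G] {i : ι} {τ : G →* Equiv.Perm (ι → H)}
    {σ : (ι → H) → G →* Equiv.Perm H}
    (hτ : ∀ a g x, τ a (Function.update g i x) = Function.update g i (σ g a x))
    (q : (ι → H) → ℝ) :
    ∑ g, entropyDrop (σ g) (fun x => q (Function.update g i x)) =
      Fintype.card H * entropyDrop τ q := by
  have havg : ∀ g x, orbitAvg (σ g) (fun x => q (Function.update g i x)) x =
      orbitAvg τ q (Function.update g i x) := fun g x => by
    simp only [orbitAvg, hτ]
  simp only [entropyDrop, negEntropy, havg, sum_sub_distrib, mul_sub,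
    sum_sum_update i fun g => q g * Real.log (q g),
    sum_sum_update i fun g => orbitAvg τ q g * Real.log (orbitAvg τ q g)]

lemma sum_entropyGap_update [Group H] (i : ι) (q : (ι → H) → ℝ) :
    ∑ g, entropyGap (fun x => q (Function.update g i x)) =
      Fintype.card H * entropyDrop (coordMul i) q := by
  rw [← sum_entropyDrop_update (σ := fun _ => MulAction.toPermHom H H) fun a g x => ?_]
  · refine sum_congr rfl fun g _ => (entropyDrop_eq_entropyGap_of_transitive (fun x y => ?_) _).symm
    exact ⟨y * x⁻¹, inv_mul_cancel_right y x⟩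
  · simp [coordMul_apply]

end Coordinates

section PowerMoves

variable {p : ℕ} [Fact p.Prime] {H : Type*} [Group H]

lemma pow_val_add {g : H} (hg : g ^ p = 1) (a b : ZMod p) :
    g ^ (a + b).val = g ^ a.val * g ^ b.val := by
  rw [ZMod.val_add, ← pow_eq_pow_mod _ hg, pow_add]

/-- The action of `ZMod p` on a group of exponent `p` in which `a` multiplies by `g ^ a`: on the
right if `right` is `true`, on the left otherwise. -/
def mulPow (hexp : ∀ g : H, g ^ p = 1) (right : Bool) (g : H) :
    Multiplicative (ZMod p) →* Equiv.Perm H :=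
  permHom (fun a x => if right then x * g ^ a.toAdd.val else g ^ a.toAdd.val * x)
    (fun x => by simp)
    (fun a b x => by
      cases right
      · simp [pow_val_add (hexp g), mul_assoc]
      · simp [add_comm a.toAdd, pow_val_add (hexp g), mul_assoc])

/-- The elementary moves on `r`-tuples: the coordinate to be changed, a different coordinate to
multiply by, and the side of the multiplication (`true` for right). -/
abbrev MoveIndex (r : ℕ) : Type := (i : Fin r) × {j : Fin r // j ≠ i} × Bool

variable {r : ℕ}

/-- The action of `ZMod p` on `r`-tuples by the powers of one elementary move. -/
def tupleMove (hexp : ∀ g : H, g ^ p = 1) (k : MoveIndex r) :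
    Multiplicative (ZMod p) →* Equiv.Perm (Fin r → H) :=
  permHom (fun a g => Function.update g k.1 (mulPow hexp k.2.2 (g k.2.1) a (g k.1)))
    (fun g => by simp) (fun a b g => by simp [k.2.1.2])

variable (hexp : ∀ g : H, g ^ p = 1)

lemma tupleMove_apply (k : MoveIndex r) (a : Multiplicative (ZMod p)) (g : Fin r → H) :
    tupleMove hexp k a g = Function.update g k.1 (mulPow hexp k.2.2 (g k.2.1) a (g k.1)) := rfl

lemma tupleMove_update {i : Fin r} (j : {j : Fin r // j ≠ i}) (right : Bool)
    (a : Multiplicative (ZMod p)) (g : Fin r → H) (x : H) :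
    tupleMove hexp ⟨i, j, right⟩ a (Function.update g i x) =
      Function.update g i (mulPow hexp right (g j) a x) := by
  simp [tupleMove_apply, j.2]

lemma mulPow_one (right : Bool) (a : Multiplicative (ZMod p)) (x : H) :
    mulPow hexp right 1 a x = x := by
  cases right
  · exact (congrArg (· * x) (one_pow _)).trans (one_mul x)
  · exact (congrArg (x * ·) (one_pow _)).trans (mul_one x)

lemma mulPow_mem {right : Bool} {K : Subgroup H} {g x : H} (hg : g ∈ K) (hx : x ∈ K)
    (a : Multiplicative (ZMod p)) : mulPow hexp right g a x ∈ K := by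
  cases right
  · exact K.mul_mem (K.pow_mem hg _) hx
  · exact K.mul_mem hx (K.pow_mem hg _)

lemma mem_genSet_of_tupleMove_mem {k : MoveIndex r} {a : Multiplicative (ZMod p)} {g : Fin r → H}
    (hg : tupleMove hexp k a g ∈ genSet r H) : g ∈ genSet r H := by
  have hmem : ∀ l, g l ∈ Subgroup.closure (Set.range g) := fun l =>
    Subgroup.subset_closure ⟨l, rfl⟩
  refine top_le_iff.1 ((ge_of_eq hg).trans ((Subgroup.closure_le _).2 ?_))
  rintro _ ⟨l, rfl⟩
  rcases eq_or_ne l k.1 with rfl | hl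
  · rw [tupleMove_apply, Function.update_self]
    exact mulPow_mem hexp (hmem _) (hmem _) a
  · rw [tupleMove_apply, Function.update_of_ne hl]
    exact hmem l

lemma sum_moveIndex (F : MoveIndex r → ℝ) :
    ∑ k, F k = ∑ i, ∑ j : {j : Fin r // j ≠ i}, (F ⟨i, j, true⟩ + F ⟨i, j, false⟩) := by
  simp only [Fintype.sum_sigma, Fintype.sum_prod_type, Fintype.sum_bool]

lemma card_moveIndex (hr : 2 ≤ r) :
    (Fintype.card (MoveIndex r) : ℝ) = 2 * r * ((r : ℝ) - 1) := by
  have hcard : ∀ i : Fin r, Fintype.card {j : Fin r // j ≠ i} = r - 1 := fun i => by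
    rw [Fintype.card_subtype_compl, Fintype.card_fin, Fintype.card_subtype_eq]
  simp only [MoveIndex, Fintype.card_sigma, Fintype.card_prod, hcard, Fintype.card_bool, sum_const,
    card_univ, Fintype.card_fin, smul_eq_mul, Nat.cast_mul, Nat.cast_sub (one_le_two.trans hr)]
  push_cast
  ring

lemma expect_moveIndex (hr : 2 ≤ r) (F : MoveIndex r → ℝ) :
    𝔼 k, F k = (∑ i, ∑ j : {j : Fin r // j ≠ i}, (F ⟨i, j, true⟩ + F ⟨i, j, false⟩)) /
      (2 * r * ((r : ℝ) - 1)) := by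
  rw [Fintype.expect_eq_sum_div_card, card_moveIndex hr, sum_moveIndex]

lemma nonempty_moveIndex (hr : 2 ≤ r) : Nonempty (MoveIndex r) :=
  ⟨⟨⟨0, by omega⟩, ⟨⟨1, by omega⟩, by simp⟩, true⟩⟩

lemma mulPow_transitive (hH : Nat.card H = p) {g : H} (hg : g ≠ 1)
    (right : Bool) (x y : H) : ∃ a, mulPow hexp right g a x = y := by
  have hpow : ∀ z : H, ∃ a : Multiplicative (ZMod p), g ^ a.toAdd.val = z := by
    intro z
    obtain ⟨n, hn⟩ := mem_powers_of_prime_card (g' := z) hH hg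
    refine ⟨Multiplicative.ofAdd (n : ZMod p), ?_⟩
    rw [toAdd_ofAdd, ZMod.val_natCast, ← pow_eq_pow_mod _ (hexp g)]
    exact hn
  cases right
  · obtain ⟨a, ha⟩ := hpow (y * x⁻¹)
    exact ⟨a, (congrArg (· * x) ha).trans (inv_mul_cancel_right y x)⟩
  · obtain ⟨a, ha⟩ := hpow (x⁻¹ * y)
    exact ⟨a, (congrArg (x * ·) ha).trans (mul_inv_cancel_left x y)⟩

lemma orbitAvg_tupleMove (k : MoveIndex r) (F : (Fin r → H) → ℝ)
    (g : Fin r → H) :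
    orbitAvg (tupleMove hexp k) F g =
      orbitAvg (mulPow hexp k.2.2 (g k.2.1)) (fun x => F (Function.update g k.1 x)) (g k.1) := rfl

variable [Fintype H] [DecidableEq H]

lemma paP_apply_eq_expect (hr : 2 ≤ r) (g g' : Fin r → H) :
    paP p r H g g' = 𝔼 k, 𝔼 a, if tupleMove (r := r) hexp k a g = g' then (1 : ℝ) else 0 := by
  have hinner : ∀ i : Fin r,
      ∑ j, ∑ a : ZMod p,
        ((if i ≠ j ∧ g' = Function.update g i (g i * g j ^ a.val) then (1 : ℝ) else 0) +
          if i ≠ j ∧ g' = Function.update g i (g j ^ a.val * g i) then 1 else 0) =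
      ∑ j : {j : Fin r // j ≠ i}, ∑ a : Multiplicative (ZMod p),
        ((if tupleMove hexp ⟨i, j, true⟩ a g = g' then (1 : ℝ) else 0) +
          if tupleMove hexp ⟨i, j, false⟩ a g = g' then 1 else 0) := by
    intro i
    rw [← Fintype.sum_subtype_add_sum_subtype (· ≠ i),
      sum_eq_zero (s := (univ : Finset {j // ¬j ≠ i})), add_zero]
    · refine Fintype.sum_equiv (Equiv.refl _) _ _ fun j =>
        Fintype.sum_equiv Multiplicative.ofAdd _ _ fun a => ?_
      simp only [ne_eq, j.2.symm, not_false_eq_true, true_and, eq_comm (a := g')]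
      rfl
    · exact fun j _ => sum_eq_zero fun a _ => by simp [not_not.1 j.2]
  rw [expect_moveIndex hr]
  unfold paP
  simp only [hinner, Fintype.expect_eq_sum_div_card, Fintype.card_multiplicative, ZMod.card,
    ← add_div, ← sum_add_distrib, ← sum_div, div_div]
  ring_nf

lemma paQ_eq_lazyKernel (hr : 2 ≤ r) : paQ p r H = lazyKernel (tupleMove (r := r) hexp) := by
  ext g g'
  rw [paQ, Matrix.smul_apply, Matrix.add_apply, paP_apply_eq_expect hexp hr, Matrix.one_apply,
    smul_eq_mul, inv_mul_eq_div]
  rfl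

end PowerMoves

section EntropyRecursion

variable {p r : ℕ} [Fact p.Prime] {H : Type*} [Group H] [Fintype H]

lemma paQ_mem_doublyStochastic [DecidableEq H] (hexp : ∀ g : H, g ^ p = 1)
    (hr : 2 ≤ r) : paQ p r H ∈ doublyStochastic ℝ (Fin r → H) := by
  have := nonempty_moveIndex hr
  rw [paQ_eq_lazyKernel hexp hr]
  exact lazyKernel_mem_doublyStochastic

/-- At the tuple `g`, the right moves of the `i`-th coordinate contract the entropy of every density
in that coordinate at total rate `κ`. -/
def LocalEntropyBound (hexp : ∀ g : H, g ^ p = 1) (κ : ℝ) (i : Fin r) (g : Fin r → H) : Prop :=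
  ∀ φ : H → ℝ, (∀ x, 0 ≤ φ x) →
    κ * entropyGap φ ≤ ∑ j : {j : Fin r // j ≠ i}, entropyDrop (mulPow hexp true (g j)) φ

variable (hexp : ∀ g : H, g ^ p = 1) {κ : ℝ} {q : (Fin r → H) → ℝ}

lemma localEntropyBound_update {i : Fin r} {g : Fin r → H} (x : H) :
    LocalEntropyBound hexp κ i (Function.update g i x) ↔ LocalEntropyBound hexp κ i g := by
  have hne : ∀ j : {j : Fin r // j ≠ i}, Function.update g i x j = g j := fun j =>
    Function.update_of_ne j.2 _ _
  simp only [LocalEntropyBound, hne]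

lemma mul_entropyGap_update_le (hκ : 0 ≤ κ) (hq : ∀ g, 0 ≤ q g) (i : Fin r) (g : Fin r → H) :
    κ * entropyGap (fun x => q (Function.update g i x)) ≤
      ∑ j : {j : Fin r // j ≠ i},
          entropyDrop (mulPow hexp true (g j)) (fun x => q (Function.update g i x)) +
        κ * Real.log (Fintype.card H) *
          ∑ x, {g | ¬LocalEntropyBound hexp κ i g}.indicator q (Function.update g i x) := by
  by_cases hg : LocalEntropyBound hexp κ i g
  · have hzero : ∀ x,
        {g | ¬LocalEntropyBound hexp κ i g}.indicator q (Function.update g i x) = 0 := fun x =>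
      Set.indicator_of_notMem (not_not.2 ((localEntropyBound_update hexp x).2 hg)) q
    simp only [hzero, sum_const_zero, mul_zero, add_zero]
    exact hg _ fun x => hq _
  · have hq' : ∀ x,
        {g | ¬LocalEntropyBound hexp κ i g}.indicator q (Function.update g i x) =
          q (Function.update g i x) := fun x =>
      Set.indicator_of_mem (mt (localEntropyBound_update hexp x).1 hg) q
    have hgap := entropyGap_le_log_card_mul_sum fun x => hq (Function.update g i x)
    have hdrop := sum_nonneg fun (j : {j : Fin r // j ≠ i}) (_ : j ∈ univ) =>
      entropyDrop_nonneg (σ := mulPow hexp true (g j)) fun x => hq (Function.update g i x)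
    simp only [hq', mul_assoc]
    linarith [mul_le_mul_of_nonneg_left hgap hκ]

lemma mul_entropyDrop_coordMul_le (hκ : 0 ≤ κ) (hq : ∀ g, 0 ≤ q g) (i : Fin r) :
    κ * entropyDrop (coordMul i) q ≤
      ∑ j : {j : Fin r // j ≠ i}, entropyDrop (tupleMove hexp ⟨i, j, true⟩) q +
        κ * Real.log (Fintype.card H) * mass q {g | ¬LocalEntropyBound hexp κ i g} := by
  have hcard : (0 : ℝ) < Fintype.card H := by exact_mod_cast Fintype.card_pos
  refine le_of_mul_le_mul_left ?_ hcard
  have hfiber : ∀ j : {j : Fin r // j ≠ i},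
      ∑ g, entropyDrop (mulPow hexp true (g j)) (fun x => q (Function.update g i x)) =
        Fintype.card H * entropyDrop (tupleMove hexp ⟨i, j, true⟩) q := fun j =>
    sum_entropyDrop_update (σ := fun g : Fin r → H => mulPow hexp true (g j))
      (fun a g x => tupleMove_update hexp j true a g x) q
  have hsum := sum_le_sum fun g (_ : g ∈ univ) => mul_entropyGap_update_le hexp hκ hq i g
  rw [sum_add_distrib, sum_comm, ← mul_sum, ← mul_sum, sum_entropyGap_update,
    sum_sum_update] at hsum
  simp only [hfiber, ← mul_sum] at hsum
  unfold mass
  linarith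

variable [DecidableEq H]

lemma entropyGap_paQ_mulVec_le (hr : 2 ≤ r) (hκ : 0 ≤ κ) (hq : ∀ g, 0 ≤ q g) :
    entropyGap (paQ p r H *ᵥ q) ≤
      (1 - κ / (4 * r * ((r : ℝ) - 1))) * entropyGap q +
        κ / (4 * r * ((r : ℝ) - 1)) *
          (Real.log (Fintype.card H) * ∑ i, mass q {g | ¬LocalEntropyBound hexp κ i g}) := by
  have hr' : (2 : ℝ) ≤ r := by exact_mod_cast hr
  have hden : 0 < 2 * (r : ℝ) * ((r : ℝ) - 1) := by nlinarith
  have := nonempty_moveIndex hr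
  have hstep := entropyGap_lazyKernel_mulVec_le (σ := tupleMove (r := r) hexp) hq
  rw [← paQ_eq_lazyKernel hexp hr, expect_moveIndex hr] at hstep
  set right := ∑ i, ∑ j : {j : Fin r // j ≠ i}, entropyDrop (tupleMove hexp ⟨i, j, true⟩) q
  set bad := Real.log (Fintype.card H) * ∑ i, mass q {g | ¬LocalEntropyBound hexp κ i g} with hbad
  have hdrop : right ≤ ∑ i, ∑ j : {j : Fin r // j ≠ i},
      (entropyDrop (tupleMove hexp ⟨i, j, true⟩) q +
        entropyDrop (tupleMove hexp ⟨i, j, false⟩) q) :=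
    sum_le_sum fun i _ => sum_le_sum fun j _ => le_add_of_nonneg_right (entropyDrop_nonneg hq)
  have hlocal : κ * ∑ i, entropyDrop (coordMul i) q ≤ right + κ * bad := by
    rw [mul_sum, hbad, ← mul_assoc, mul_sum univ _ (κ * _), ← sum_add_distrib]
    exact sum_le_sum fun i _ => mul_entropyDrop_coordMul_le hexp hκ hq i
  have htensor := mul_le_mul_of_nonneg_left (entropyGap_le_sum_entropyDrop_coordMul hq) hκ
  have hright : (κ * entropyGap q - κ * bad) / (2 * r * ((r : ℝ) - 1)) ≤
      right / (2 * r * ((r : ℝ) - 1)) := by gcongr; linarith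
  have hdrop' := div_le_div_of_nonneg_right hdrop hden.le
  have hθ : κ / (4 * r * ((r : ℝ) - 1)) = κ / (2 * r * ((r : ℝ) - 1)) / 2 := by
    rw [div_div]; ring_nf
  rw [hθ]
  rw [sub_div, mul_div_right_comm, mul_div_right_comm κ bad] at hright
  linarith

lemma entropyGap_paQ_pow_le (hr : 2 ≤ r) (hκ : 0 ≤ κ) (hκ1 : κ / (4 * r * ((r : ℝ) - 1)) ≤ 1)
    (x : Fin r → H) {δ : ℝ} (hδ : 0 ≤ δ) {T₀ T : ℕ}
    (hbad : ∀ t, T₀ ≤ t → t < T₀ + T → Real.log (Fintype.card H) *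
      ∑ i, mass ((paQ p r H ^ t) x) {g | ¬LocalEntropyBound hexp κ i g} ≤ δ) :
    entropyGap ((paQ p r H ^ (T₀ + T)) x) ≤
      (1 - κ / (4 * r * ((r : ℝ) - 1))) ^ T * (r * Real.log (Fintype.card H)) + δ := by
  have hQ : ∀ t, paQ p r H ^ t ∈ doublyStochastic ℝ (Fin r → H) := fun t =>
    pow_mem (paQ_mem_doublyStochastic hexp hr) t
  have hr' : (2 : ℝ) ≤ r := by exact_mod_cast hr
  have hθ : 0 ≤ κ / (4 * r * ((r : ℝ) - 1)) := div_nonneg hκ (by nlinarith)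
  induction T with
  | zero =>
    have hgap := entropyGap_le_log_card (fun g => nonneg_of_mem_doublyStochastic (hQ T₀))
      (sum_row_of_mem_doublyStochastic (hQ T₀) x)
    rw [Fintype.card_pi_const, Nat.cast_pow, Real.log_pow] at hgap
    rw [pow_zero, one_mul, add_zero]
    linarith
  | succ T ih =>
    have ih' := ih fun t h₀ h₁ => hbad t h₀ (by omega)
    have hstep := entropyGap_paQ_mulVec_le hexp hr hκ
      fun g => nonneg_of_mem_doublyStochastic (hQ (T₀ + T)) (i := x) (j := g)
    have hbadT := hbad (T₀ + T) (by omega) (by omega)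
    have hrow : (paQ p r H ^ (T₀ + (T + 1))) x = paQ p r H *ᵥ (paQ p r H ^ (T₀ + T)) x := by
      rw [paQ_eq_lazyKernel hexp hr, ← add_assoc, lazyKernel_pow_succ_row]
    rw [hrow, pow_succ]
    nlinarith [mul_le_mul_of_nonneg_left ih' (sub_nonneg.2 hκ1),
      mul_le_mul_of_nonneg_left hbadT hθ]

theorem sq_sum_abs_paQ_pow_sub_le (hr : 2 ≤ r) (hκ : 0 ≤ κ)
    (hκ1 : κ / (4 * r * ((r : ℝ) - 1)) ≤ 1) (x : Fin r → H) {δ : ℝ} (hδ : 0 ≤ δ) {T₀ T : ℕ}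
    (hbad : ∀ t, T₀ ≤ t → t < T₀ + T → Real.log (Fintype.card H) *
      ∑ i, mass ((paQ p r H ^ t) x) {g | ¬LocalEntropyBound hexp κ i g} ≤ δ) :
    (∑ g, |(paQ p r H ^ (T₀ + T)) x g - (Fintype.card (Fin r → H) : ℝ)⁻¹|) ^ 2 ≤
      4 * (Real.exp (-(κ / (4 * r * ((r : ℝ) - 1)) * T)) * (r * Real.log (Fintype.card H)) +
        δ) := by
  have hQ := pow_mem (paQ_mem_doublyStochastic hexp hr) (T₀ + T)
  set θ := κ / (4 * r * ((r : ℝ) - 1))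
  calc _ ≤ 4 * entropyGap ((paQ p r H ^ (T₀ + T)) x) :=
        sq_sum_abs_sub_le_entropyGap (fun g => nonneg_of_mem_doublyStochastic hQ)
          (sum_row_of_mem_doublyStochastic hQ x)
    _ ≤ 4 * ((1 - θ) ^ T * (r * Real.log (Fintype.card H)) + δ) := by
        gcongr; exact entropyGap_paQ_pow_le hexp hr hκ hκ1 x hδ hbad
    _ ≤ _ := by gcongr; exact one_sub_pow_le_exp_neg hκ1 T

end EntropyRecursion

section PrimeOrder

variable {p r : ℕ} {H : Type*} [Group H]

lemma pow_eq_one_of_card_eq [Fintype H] (hH : Fintype.card H = p) (g : H) : g ^ p = 1 :=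
  hH ▸ pow_card_eq_one

variable [DecidableEq H]

/-- The number of coordinates of `g` different from `1`. -/
def weight (g : Fin r → H) : ℕ := hammingDist g 1

lemma weight_le (g : Fin r → H) : weight g ≤ r :=
  hammingDist_le_card_fintype.trans_eq (Fintype.card_fin r)

lemma weight_pos {g : Fin r → H} (hg : g ≠ 1) : 0 < weight g := hammingDist_pos.2 hg

lemma weight_eq_sum (g : Fin r → H) : weight g = ∑ j, if g j = 1 then 0 else 1 := by
  rw [weight, hammingDist, card_filter]
  simp only [ne_eq, ite_not, Pi.one_apply]

lemma weight_update_add (i : Fin r) (g : Fin r → H) (x : H) :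
    weight (Function.update g i x) + (if g i = 1 then 0 else 1) =
      weight g + if x = 1 then 0 else 1 := by
  have hrest : ∑ j : {j // j ≠ i}, (if Function.update g i x j = 1 then 0 else 1) =
      ∑ j : {j // j ≠ i}, if g j = 1 then 0 else 1 :=
    Fintype.sum_congr _ _ fun j => by rw [Function.update_of_ne j.2]
  rw [weight_eq_sum, weight_eq_sum, Fintype.sum_eq_add_sum_subtype_ne _ i,
    Fintype.sum_eq_add_sum_subtype_ne (fun j => if g j = 1 then 0 else 1) i, hrest,
    Function.update_self]
  omega

lemma sum_ne_one_eq (i : Fin r) (g : Fin r → H) :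
    ∑ j : {j // j ≠ i}, (if g j = 1 then (0 : ℝ) else 1) =
      weight g - if g i = 1 then 0 else 1 := by
  rw [weight_eq_sum, eq_sub_iff_add_eq']
  push_cast
  exact (Fintype.sum_eq_add_sum_subtype_ne (fun j => if g j = 1 then (0 : ℝ) else 1) i).symm

/-- The mean change of `V (weight g)` when a nontrivial coordinate multiplies the coordinate `x` of
a tuple of weight `n` in a group of order `p`. -/
def weightDrift (p : ℕ) (V : ℕ → ℝ) (n : ℕ) (x : H) : ℝ :=
  if x = 1 then (1 - (p : ℝ)⁻¹) * (V (n + 1) - V n) else (p : ℝ)⁻¹ * (V (n - 1) - V n)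

lemma sum_mul_weightDrift (p : ℕ) (V : ℕ → ℝ) (g : Fin r → H) :
    ∑ i, (weight g - if g i = 1 then (0 : ℝ) else 1) * weightDrift p V (weight g) (g i) =
      weight g * (r - weight g) * (1 - (p : ℝ)⁻¹) * (V (weight g + 1) - V (weight g)) +
        weight g * (weight g - 1) * (p : ℝ)⁻¹ * (V (weight g - 1) - V (weight g)) := by
  set n := weight g with hn
  set up := (1 - (p : ℝ)⁻¹) * (V (n + 1) - V n) with hup
  set down := (p : ℝ)⁻¹ * (V (n - 1) - V n) with hdown
  have hterm : ∀ i, (n - if g i = 1 then (0 : ℝ) else 1) * weightDrift p V n (g i) =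
      n * up + (if g i = 1 then 0 else 1) * ((n - 1) * down - n * up) := by
    intro i
    rw [weightDrift, ← hup, ← hdown]
    split_ifs <;> ring
  have hcount : (∑ i, if g i = 1 then (0 : ℝ) else 1) = n := by
    rw [hn, weight_eq_sum]; push_cast; rfl
  rw [sum_congr rfl fun i _ => hterm i, sum_add_distrib, sum_const, ← sum_mul, hcount,
    card_univ, Fintype.card_fin, nsmul_eq_mul]
  ring

variable [Fintype H]

lemma expect_ite_eq_one (a b : ℝ) :
    (𝔼 x : H, if x = 1 then a else b) = b + (Fintype.card H : ℝ)⁻¹ * (a - b) := by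
  have hsplit : ∀ x : H, (if x = 1 then a else b) = b + if x = 1 then a - b else 0 := fun x => by
    split_ifs <;> ring
  rw [expect_congr rfl fun x _ => hsplit x, expect_add_distrib, Fintype.expect_const,
    Fintype.expect_eq_sum_div_card, sum_ite_eq', if_pos (mem_univ _), div_eq_inv_mul]

lemma expect_weight_update (hH : Fintype.card H = p) (V : ℕ → ℝ) (i : Fin r) (g : Fin r → H) :
    𝔼 x, V (weight (Function.update g i x)) =
      V (weight g) + weightDrift p V (weight g) (g i) := by
  have hupdate := fun x => weight_update_add i g x
  by_cases hi : g i = 1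
  · have hV : ∀ x, V (weight (Function.update g i x)) =
        if x = 1 then V (weight g) else V (weight g + 1) := by
      intro x
      have := hupdate x
      split_ifs at this ⊢ <;> exact congrArg V (by omega)
    rw [weightDrift, if_pos hi, expect_congr rfl fun x _ => hV x, expect_ite_eq_one, hH]
    ring
  · have hV : ∀ x, V (weight (Function.update g i x)) =
        if x = 1 then V (weight g - 1) else V (weight g) := by
      intro x
      have := hupdate x
      split_ifs at this ⊢ <;> exact congrArg V (by omega)
    rw [weightDrift, if_neg hi, expect_congr rfl fun x _ => hV x, expect_ite_eq_one, hH]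

variable [Fact p.Prime]

lemma orbitAvg_tupleMove_weight (hexp : ∀ g : H, g ^ p = 1) (hH : Fintype.card H = p) (V : ℕ → ℝ)
    (k : MoveIndex r) (g : Fin r → H) :
    orbitAvg (tupleMove hexp k) (fun g => V (weight g)) g =
      V (weight g) + (if g k.2.1 = 1 then 0 else 1) * weightDrift p V (weight g) (g k.1) := by
  by_cases hj : g k.2.1 = 1
  · have hfix : ∀ a, tupleMove hexp k a g = g := fun a => by
      rw [tupleMove_apply, hj, mulPow_one, Function.update_eq_self]
    simp only [orbitAvg, hfix, hj, if_true, Fintype.expect_const, zero_mul, add_zero]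
  · rw [orbitAvg_tupleMove, if_neg hj, one_mul,
      orbitAvg_eq_expect_of_transitive
        (mulPow_transitive hexp (Nat.card_eq_fintype_card.trans hH) hj _),
      expect_weight_update hH]

lemma paQ_mulVec_weight (hH : Fintype.card H = p) (hr : 2 ≤ r)
    (V : ℕ → ℝ) (g : Fin r → H) :
    (paQ p r H *ᵥ fun g => V (weight g)) g = V (weight g) +
      (weight g * (r - weight g) * (1 - (p : ℝ)⁻¹) * (V (weight g + 1) - V (weight g)) +
        weight g * (weight g - 1) * (p : ℝ)⁻¹ * (V (weight g - 1) - V (weight g))) /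
      (2 * r * ((r : ℝ) - 1)) := by
  have := nonempty_moveIndex hr
  have hexp : ∀ g : H, g ^ p = 1 := pow_eq_one_of_card_eq hH
  have hmean : 𝔼 k : MoveIndex r,
      (if g k.2.1 = 1 then 0 else 1) * weightDrift p V (weight g) (g k.1) =
      2 * ((∑ i, (weight g - if g i = 1 then (0 : ℝ) else 1) *
        weightDrift p V (weight g) (g i)) / (2 * r * ((r : ℝ) - 1))) := by
    simp only [expect_moveIndex hr, ← two_mul, ← mul_sum, ← sum_mul, sum_ne_one_eq, mul_div_assoc]
  rw [paQ_eq_lazyKernel hexp hr, lazyKernel_mulVec, ← sum_mul_weightDrift p V g]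
  simp only [orbitAvg_tupleMove_weight hexp hH]
  rw [expect_add_distrib, Fintype.expect_const, hmean]
  ring

end PrimeOrder

section PrimeOrderMixing

lemma inv_drift_le {n r : ℕ} {x : ℝ} (hx0 : 0 ≤ x) (hx : x ≤ 1 / 3) (hnr : n ≤ r) :
    n * (r - n) * (1 - x) * (((n + 1 : ℕ) : ℝ)⁻¹ - (n : ℝ)⁻¹) +
      n * (n - 1) * x * (((n - 1 : ℕ) : ℝ)⁻¹ - (n : ℝ)⁻¹) ≤ 1 - (r - 1) / 3 * (n : ℝ)⁻¹ := by
  rcases n.eq_zero_or_pos with rfl | hn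
  · simp
  have hn1 : (1 : ℝ) ≤ n := by exact_mod_cast hn
  have hnr' : (n : ℝ) ≤ r := by exact_mod_cast hnr
  have hup : n * (r - n) * (1 - x) * (((n + 1 : ℕ) : ℝ)⁻¹ - (n : ℝ)⁻¹) ≤
      2 / 3 - (r - 1) / 3 * (n : ℝ)⁻¹ :=
    calc n * (r - n) * (1 - x) * (((n + 1 : ℕ) : ℝ)⁻¹ - (n : ℝ)⁻¹)
        = -((1 - x) * ((r - n) / (n + 1))) := by push_cast; field_simp; ring
      _ ≤ -(2 / 3 * ((r - n) / (n + 1))) := neg_le_neg <|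
          mul_le_mul_of_nonneg_right (by linarith) (div_nonneg (by linarith) (by linarith))
      _ = 2 / 3 - 2 * (r + 1) / (3 * (n + 1)) := by field_simp; ring
      _ ≤ 2 / 3 - (r - 1) / (3 * n) := by
          gcongr 2 / 3 - ?_
          rw [div_le_div_iff₀ (by positivity) (by positivity)]
          nlinarith
      _ = 2 / 3 - (r - 1) / 3 * (n : ℝ)⁻¹ := by rw [← div_div, ← div_eq_mul_inv]
  have hdown : n * (n - 1) * x * (((n - 1 : ℕ) : ℝ)⁻¹ - (n : ℝ)⁻¹) ≤ x := by
    rcases (Nat.succ_le_of_lt hn).eq_or_lt with rfl | hn2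
    · simpa using hx0
    · have hn2' : (0 : ℝ) < n - 1 := by linarith [(by exact_mod_cast hn2 : (1 : ℝ) < n)]
      rw [Nat.cast_sub hn, Nat.cast_one]
      refine le_of_eq ?_
      field_simp
      ring
  linarith

lemma half_pow_drift_le {n r : ℕ} {x : ℝ} (hx : x ≤ 1 / 3) (hnr : n ≤ r) :
    n * (r - n) * (1 - x) * ((1 / 2) ^ (n + 1) - (1 / 2) ^ n) +
      n * (n - 1) * x * ((1 / 2) ^ (n - 1) - (1 / 2) ^ n) ≤
      2 * r * ((r : ℝ) - 1) * (1 / 2) ^ (r / 2) := by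
  rcases n with _ | k
  · rcases r.eq_zero_or_pos with rfl | hr
    · simp
    · have hr1 : (0 : ℝ) ≤ r - 1 := by linarith [(by exact_mod_cast hr : (1 : ℝ) ≤ r)]
      simpa using by positivity
  have hkr : (k : ℝ) + 1 ≤ r := by exact_mod_cast hnr
  have : (0 : ℝ) ≤ k := k.cast_nonneg
  have hr1 : (0 : ℝ) ≤ r - 1 := by linarith
  have hfactor : ((k + 1 : ℕ) : ℝ) * (r - (k + 1 : ℕ)) * (1 - x) *
        ((1 / 2) ^ (k + 1 + 1) - (1 / 2) ^ (k + 1)) +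
      (k + 1 : ℕ) * ((k + 1 : ℕ) - 1) * x * ((1 / 2) ^ (k + 1 - 1) - (1 / 2) ^ (k + 1)) =
      (k + 1) * (k * x - (r - (k + 1)) * (1 - x) / 2) * (1 / 2) ^ (k + 1) := by
    rw [Nat.add_sub_cancel, pow_succ, pow_succ]
    push_cast
    ring
  have hup : ((r : ℝ) - (k + 1)) / 3 ≤ (r - (k + 1)) * (1 - x) / 2 := by nlinarith
  have hdown : (k : ℝ) * x ≤ k / 3 := by nlinarith
  rw [hfactor]
  rcases le_or_gt (2 * k + 1) r with hk | hk
  · have hk' : (2 : ℝ) * k + 1 ≤ r := by exact_mod_cast hk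
    have hneg : (k + 1) * (k * x - (r - (k + 1)) * (1 - x) / 2) ≤ 0 :=
      mul_nonpos_of_nonneg_of_nonpos (by linarith) (by linarith)
    exact (mul_nonpos_of_nonpos_of_nonneg hneg (by positivity)).trans (by positivity)
  · have hpow : (1 / 2 : ℝ) ^ (k + 1) ≤ (1 / 2) ^ (r / 2) :=
      pow_le_pow_of_le_one (by norm_num) (by norm_num) (by omega)
    have hcoef : (k + 1) * (k * x - (r - (k + 1)) * (1 - x) / 2) ≤ 2 * r * ((r : ℝ) - 1) := by
      nlinarith
    exact mul_le_mul hcoef hpow (by positivity) (by positivity)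

lemma inv_cast_le_third {p : ℕ} (hp : 3 ≤ p) : (p : ℝ)⁻¹ ≤ 1 / 3 := by
  rw [one_div]
  exact inv_anti₀ (by norm_num) (by exact_mod_cast hp)

variable {p r : ℕ} [Fact p.Prime] {H : Type*} [Group H] [Fintype H] [DecidableEq H]

lemma isAbsorbing_ne_one (hexp : ∀ g : H, g ^ p = 1) (hr : 2 ≤ r) :
    IsAbsorbing (paQ p r H) {u | u ≠ 1} := by
  rw [paQ_eq_lazyKernel hexp hr]
  refine isAbsorbing_lazyKernel fun k a u hu h1 => hu ?_
  rw [h1, tupleMove_apply, Pi.one_apply, mulPow_one]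
  exact Function.update_eq_self k.1 1

lemma paQ_pow_mem_rowStochastic (hexp : ∀ g : H, g ^ p = 1) (hr : 2 ≤ r) (t : ℕ) :
    paQ p r H ^ t ∈ Matrix.rowStochastic ℝ (Fin r → H) :=
  pow_mem (mem_doublyStochastic_iff_mem_rowStochastic_and_mem_colStochastic.1
    (paQ_mem_doublyStochastic hexp hr)).1 t

lemma paQ_mulVec_inv_weight_le (hp : 3 ≤ p) (hH : Fintype.card H = p) (hr : 2 ≤ r)
    (g : Fin r → H) :
    (paQ p r H *ᵥ fun g => (weight g : ℝ)⁻¹) g ≤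
      (1 - 1 / (6 * r)) * (weight g : ℝ)⁻¹ + 1 / (r : ℝ) ^ 2 := by
  have hr' : (2 : ℝ) ≤ r := by exact_mod_cast hr
  have hr1 : (0 : ℝ) < r - 1 := by linarith
  rw [paQ_mulVec_weight hH hr fun n : ℕ => (n : ℝ)⁻¹]
  set v := (weight g : ℝ)⁻¹
  have hdrift := inv_drift_le (x := (p : ℝ)⁻¹) (by positivity) (inv_cast_le_third hp) (weight_le g)
  calc _ ≤ v + (1 - (r - 1) / 3 * v) / (2 * r * ((r : ℝ) - 1)) := by gcongr
    _ = (1 - 1 / (6 * r)) * v + 1 / (2 * r * ((r : ℝ) - 1)) := by field_simp; ring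
    _ ≤ (1 - 1 / (6 * r)) * v + 1 / (r : ℝ) ^ 2 := by
        gcongr
        nlinarith

lemma paQ_mulVec_half_pow_weight_le (hp : 3 ≤ p) (hH : Fintype.card H = p) (hr : 2 ≤ r)
    (g : Fin r → H) :
    (paQ p r H *ᵥ fun g => (1 / 2 : ℝ) ^ weight g) g ≤
      1 * (1 / 2) ^ weight g + (1 / 2) ^ (r / 2) := by
  have hr' : (2 : ℝ) ≤ r := by exact_mod_cast hr
  have hden : 0 < 2 * (r : ℝ) * (r - 1) := by nlinarith
  rw [paQ_mulVec_weight hH hr fun n : ℕ => (1 / 2 : ℝ) ^ n, one_mul]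
  gcongr
  rw [div_le_iff₀' hden]
  exact half_pow_drift_le (inv_cast_le_third hp) (weight_le g)

lemma mass_weight_lt_le (hp : 3 ≤ p) (hH : Fintype.card H = p) (hr : 2 ≤ r) {t : ℕ}
    (ht : 6 * r * Real.log r ≤ t) {u : Fin r → H} (hu : u ≠ 1) :
    mass ((paQ p r H ^ t) u) {y | 128 * weight y < r} ≤ 7 / 128 := by
  have hexp : ∀ g : H, g ^ p = 1 := pow_eq_one_of_card_eq hH
  have hr' : (2 : ℝ) ≤ r := by exact_mod_cast hr
  have hQ := paQ_pow_mem_rowStochastic hexp hr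
  have hu1 : (weight u : ℝ)⁻¹ ≤ 1 := inv_le_one_of_one_le₀ (by exact_mod_cast weight_pos hu)
  have hmean : (paQ p r H ^ t *ᵥ fun g => (weight g : ℝ)⁻¹) u ≤ 7 / r :=
    calc (paQ p r H ^ t *ᵥ fun g => (weight g : ℝ)⁻¹) u
        ≤ Real.exp (-(1 / (6 * r) * t)) * (weight u : ℝ)⁻¹ + 1 / (r : ℝ) ^ 2 / (1 / (6 * r)) :=
          pow_mulVec_le_exp_mul_add (pow_one (paQ p r H) ▸ hQ 1) (by positivity)
            ((div_le_one (by positivity)).2 (by linarith)) (by positivity)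
            (fun g => by positivity) (paQ_mulVec_inv_weight_le hp hH hr) t u
      _ ≤ Real.exp (-Real.log r) * 1 + 1 / (r : ℝ) ^ 2 / (1 / (6 * r)) := by
          gcongr
          rw [one_div_mul_eq_div, le_div_iff₀ (by positivity)]
          linarith
      _ = 7 / r := by
          rw [Real.exp_neg, Real.exp_log (by positivity)]
          field_simp
          norm_num
  have hmarkov : 128 / r * mass ((paQ p r H ^ t) u) {y | 128 * weight y < r} ≤
      (paQ p r H ^ t *ᵥ fun g => (weight g : ℝ)⁻¹) u := by
    refine mul_mass_le_sum_mul (fun y => Matrix.nonneg_of_mem_rowStochastic (hQ t))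
      (fun y => by positivity) fun y (hy : 128 * weight y < r) hqy => ?_
    have hy1 : y ≠ 1 := by
      rintro rfl
      exact hqy ((isAbsorbing_ne_one hexp hr).pow t u hu 1 (not_not.2 rfl))
    have hy0 : (0 : ℝ) < weight y := by exact_mod_cast weight_pos hy1
    rw [div_le_iff₀ (by positivity), inv_mul_eq_div, le_div_iff₀ hy0]
    exact_mod_cast hy.le
  have hle := (le_div_iff₀' (by positivity)).2 (hmarkov.trans hmean)
  exact hle.trans_eq (by field_simp)

lemma mass_weight_le_le (hp : 3 ≤ p) (hH : Fintype.card H = p) (hr : 2 ≤ r) (t : ℕ)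
    {y : Fin r → H} (hy : r ≤ 128 * weight y) :
    mass ((paQ p r H ^ t) y) {g | weight g ≤ r / 256} ≤ (1 + t) * (1 / 2) ^ (r / 256) := by
  have hQ := paQ_pow_mem_rowStochastic (pow_eq_one_of_card_eq hH) hr
  have hhalf : ∀ {m n : ℕ}, m ≤ n → (1 / 2 : ℝ) ^ n ≤ (1 / 2) ^ m :=
    pow_le_pow_of_le_one (by norm_num) (by norm_num)
  refine le_of_mul_le_mul_left ?_ (by positivity : (0 : ℝ) < (1 / 2) ^ (r / 256))
  calc (1 / 2) ^ (r / 256) * mass ((paQ p r H ^ t) y) {g | weight g ≤ r / 256}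
      ≤ (paQ p r H ^ t *ᵥ fun g => (1 / 2 : ℝ) ^ weight g) y :=
        mul_mass_le_sum_mul (fun g => Matrix.nonneg_of_mem_rowStochastic (hQ t))
          (fun g => by positivity) fun g hg _ => hhalf hg
    _ ≤ 1 ^ t * (1 / 2) ^ weight y + (1 / 2) ^ (r / 2) * ∑ s ∈ range t, 1 ^ s :=
        pow_mulVec_le_of_mulVec_le (pow_one (paQ p r H) ▸ hQ 1) zero_le_one
          (paQ_mulVec_half_pow_weight_le hp hH hr) t y
    _ = (1 / 2) ^ weight y + (1 / 2) ^ (r / 2) * t := by simp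
    _ ≤ (1 / 2) ^ (r / 256 + r / 256) + (1 / 2) ^ (r / 256 + r / 256) * t := by
        gcongr ?_ + ?_ * _
        · exact hhalf (by omega)
        · exact hhalf (by omega)
    _ = (1 / 2) ^ (r / 256) * ((1 + t) * (1 / 2) ^ (r / 256)) := by rw [pow_add]; ring

lemma localEntropyBound_of_lt_weight (hexp : ∀ g : H, g ^ p = 1) (hH : Fintype.card H = p) {k : ℕ}
    {g : Fin r → H} (hk : k < weight g) (i : Fin r) : LocalEntropyBound hexp k i g := by
  intro φ hφ
  have hcount : (k : ℝ) ≤ ∑ j : {j // j ≠ i}, if g j = 1 then (0 : ℝ) else 1 := by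
    have hk' : (k : ℝ) + 1 ≤ weight g := by exact_mod_cast hk
    rw [sum_ne_one_eq]
    split_ifs <;> linarith
  calc k * entropyGap φ
      ≤ (∑ j : {j // j ≠ i}, if g j = 1 then (0 : ℝ) else 1) * entropyGap φ :=
        mul_le_mul_of_nonneg_right hcount (entropyGap_nonneg hφ)
    _ ≤ ∑ j : {j // j ≠ i}, entropyDrop (mulPow hexp true (g j)) φ := by
        rw [sum_mul]
        refine sum_le_sum fun j _ => ?_
        split_ifs with hj
        · rw [zero_mul]
          exact entropyDrop_nonneg hφ
        · rw [one_mul, entropyDrop_eq_entropyGap_of_transitive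
            (mulPow_transitive hexp (Nat.card_eq_fintype_card.trans hH) hj true)]

lemma sq_sum_abs_paQ_pow_sub_le_of_weight (hp : 3 ≤ p) (hH : Fintype.card H = p) (hr : 2 ≤ r)
    (T : ℕ) {y : Fin r → H} (hy : r ≤ 128 * weight y) :
    (∑ g, |(paQ p r H ^ T) y g - (Fintype.card (Fin r → H) : ℝ)⁻¹|) ^ 2 ≤
      4 * (Real.exp (-((r / 256 : ℕ) / (4 * r * ((r : ℝ) - 1)) * T)) * (r * Real.log p) +
        Real.log p * (r * ((1 + T) * (1 / 2) ^ (r / 256)))) := by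
  have hexp : ∀ g : H, g ^ p = 1 := pow_eq_one_of_card_eq hH
  have hr' : (2 : ℝ) ≤ r := by exact_mod_cast hr
  have hκ : ((r / 256 : ℕ) : ℝ) ≤ r := by exact_mod_cast Nat.div_le_self _ _
  have : 0 ≤ Real.log p := Real.log_natCast_nonneg p
  have hbad : ∀ t, 0 ≤ t → t < 0 + T → Real.log (Fintype.card H) *
      ∑ i, mass ((paQ p r H ^ t) y) {g | ¬LocalEntropyBound hexp (r / 256 : ℕ) i g} ≤
      Real.log p * (r * ((1 + T) * (1 / 2) ^ (r / 256))) := by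
    intro t _ ht
    have hmass : ∀ i : Fin r,
        mass ((paQ p r H ^ t) y) {g | ¬LocalEntropyBound hexp (r / 256 : ℕ) i g} ≤
        (1 + T) * (1 / 2) ^ (r / 256) := by
      intro i
      refine (mass_mono (fun g => Matrix.nonneg_of_mem_rowStochastic
        (paQ_pow_mem_rowStochastic hexp hr t)) fun g hg => ?_).trans
          ((mass_weight_le_le hp hH hr t hy).trans ?_)
      · exact le_of_not_gt fun h => hg (localEntropyBound_of_lt_weight hexp hH h i)
      · gcongr
        omega
    rw [hH]
    gcongr
    exact (sum_le_sum fun i _ => hmass i).trans_eq (by simp)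
  have hmix := sq_sum_abs_paQ_pow_sub_le hexp hr (Nat.cast_nonneg (r / 256))
    ((div_le_one (by nlinarith)).2 (by nlinarith)) y
    (by positivity : 0 ≤ Real.log p * (r * ((1 + T) * (1 / 2) ^ (r / 256)))) hbad
  rwa [zero_add, hH] at hmix

end PrimeOrderMixing

universe u

section PrimeOrderMixingTime

open Filter

lemma exp_neg_gap_mul_le {r T : ℕ} (hr : 512 ≤ r) (hT : 4096 * r * Real.log r ≤ T) :
    Real.exp (-((r / 256 : ℕ) / (4 * r * ((r : ℝ) - 1)) * T)) ≤ 1 / (r : ℝ) ^ 2 := by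
  have hr' : (512 : ℝ) ≤ r := by exact_mod_cast hr
  have hr1 : (0 : ℝ) < r - 1 := by linarith
  have hk : (r : ℝ) ≤ 512 * (r / 256 : ℕ) := by exact_mod_cast (by omega : r ≤ 512 * (r / 256))
  have hgap : 1 / (2048 * r : ℝ) ≤ (r / 256 : ℕ) / (4 * r * ((r : ℝ) - 1)) := by
    rw [div_le_div_iff₀ (by positivity) (by positivity)]
    nlinarith
  calc Real.exp (-((r / 256 : ℕ) / (4 * r * ((r : ℝ) - 1)) * T))
      ≤ Real.exp (-(1 / (2048 * r) * (4096 * r * Real.log r))) := by gcongr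
    _ = Real.exp (-Real.log ((r : ℝ) ^ 2)) := by
        rw [Real.log_pow]
        congr 2
        field_simp
        ring
    _ = 1 / (r : ℝ) ^ 2 := by rw [Real.exp_neg, Real.exp_log (by positivity), one_div]

lemma eventually_pow_three_mul_half_pow_le {δ : ℝ} (hδ : 0 < δ) :
    ∀ᶠ r : ℕ in atTop, (r : ℝ) ^ 3 * (1 / 2) ^ (r / 256) ≤ δ := by
  have hlim : Tendsto (fun k : ℕ => (k : ℝ) ^ 3 * (1 / 2) ^ k) atTop (nhds 0) :=
    tendsto_pow_const_mul_const_pow_of_abs_lt_one 3 (by norm_num [abs_of_pos])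
  have hsmall := (hlim.comp (Nat.tendsto_div_const_atTop (by norm_num : 256 ≠ 0))).eventually
    (gt_mem_nhds (by positivity : 0 < δ / 512 ^ 3))
  filter_upwards [hsmall, eventually_ge_atTop 256] with r hr hr256
  have hk : (r : ℝ) ≤ 512 * (r / 256 : ℕ) := by exact_mod_cast (by omega : r ≤ 512 * (r / 256))
  calc (r : ℝ) ^ 3 * (1 / 2) ^ (r / 256)
      ≤ (512 * (r / 256 : ℕ) : ℝ) ^ 3 * (1 / 2) ^ (r / 256) := by gcongr
    _ = 512 ^ 3 * (((r / 256 : ℕ) : ℝ) ^ 3 * (1 / 2) ^ (r / 256)) := by ring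
    _ ≤ 512 ^ 3 * (δ / 512 ^ 3) := by gcongr; exact hr.le
    _ = δ := by field_simp

lemma eventually_mixing_error_le (c : ℝ) : ∀ᶠ r : ℕ in atTop, ∀ T : ℕ,
    4096 * r * Real.log r ≤ T → T ≤ 4096 * r * Real.log r + 1 →
    4 * (Real.exp (-((r / 256 : ℕ) / (4 * r * ((r : ℝ) - 1)) * T)) * (r * |c|) +
      |c| * (r * ((1 + T) * (1 / 2) ^ (r / 256)))) ≤ (1 / 4) ^ 2 := by
  have hδ : 0 < 1 / (128 * 5000 * (|c| + 1)) := by positivity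
  filter_upwards [eventually_pow_three_mul_half_pow_le hδ, eventually_ge_atTop 512,
    (tendsto_natCast_atTop_atTop (R := ℝ)).eventually_ge_atTop (128 * |c|)]
    with r hpoly hr hrc T hT hT'
  have hr' : (512 : ℝ) ≤ r := by exact_mod_cast hr
  have hlogr : Real.log r ≤ r - 1 := Real.log_le_sub_one_of_pos (by linarith)
  have hexp : Real.exp (-((r / 256 : ℕ) / (4 * r * ((r : ℝ) - 1)) * T)) * (r * |c|) ≤ 1 / 128 :=
    calc _ ≤ 1 / (r : ℝ) ^ 2 * (r * |c|) := by gcongr; exact exp_neg_gap_mul_le hr hT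
      _ = |c| / r := by field_simp
      _ ≤ 1 / 128 := by rw [div_le_div_iff₀ (by positivity) (by norm_num)]; linarith
  have hT3 : r * (1 + (T : ℝ)) ≤ 5000 * (r : ℝ) ^ 3 := by
    have hT2 : (T : ℝ) ≤ 4096 * r * r + 1 := by nlinarith
    nlinarith
  have hrest : |c| * (r * ((1 + T) * (1 / 2) ^ (r / 256))) ≤ 1 / 128 :=
    calc |c| * (r * ((1 + T) * (1 / 2) ^ (r / 256)))
        = |c| * (r * (1 + T) * (1 / 2) ^ (r / 256)) := by ring
      _ ≤ (|c| + 1) * (5000 * (r : ℝ) ^ 3 * (1 / 2) ^ (r / 256)) := by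
          gcongr
          linarith
      _ = (|c| + 1) * 5000 * ((r : ℝ) ^ 3 * (1 / 2) ^ (r / 256)) := by ring
      _ ≤ (|c| + 1) * 5000 * (1 / (128 * 5000 * (|c| + 1))) := by gcongr
      _ = 1 / 128 := by field_simp
  linarith

lemma one_le_log_of_three_le {x : ℝ} (hx : 3 ≤ x) : 1 ≤ Real.log x := by
  rw [Real.le_log_iff_exp_le (by linarith)]
  linarith [Real.exp_one_lt_d9]

/-- After `T` steps the walk from any nontrivial tuple is within `ℓ¹`-distance `1 / 2` of the
uniform density. -/
def HalfMixed (p : ℕ) [Fact p.Prime] (r : ℕ) (H : Type*) [Group H] [Fintype H] [DecidableEq H]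
    (T : ℕ) : Prop :=
  ∀ u : Fin r → H, u ≠ 1 →
    ∑ w, |(paQ p r H ^ T) u w - (Fintype.card (Fin r → H) : ℝ)⁻¹| ≤ 1 / 2

theorem eventually_exists_mixing_of_card_eq (p : ℕ) [Fact p.Prime] (hp : 3 ≤ p) :
    ∀ᶠ r : ℕ in atTop, ∃ T : ℕ, T ≤ 5000 * r * Real.log r ∧
      ∀ (H : Type u) [Group H] [Fintype H] [DecidableEq H], Fintype.card H = p →
        HalfMixed p r H T := by
  filter_upwards [eventually_mixing_error_le (Real.log p), eventually_ge_atTop 512]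
    with r herror hr
  have hr' : (512 : ℝ) ≤ r := by exact_mod_cast hr
  have hlog : 1 ≤ Real.log r := one_le_log_of_three_le (by linarith)
  refine ⟨⌈6 * r * Real.log r⌉₊ + ⌈4096 * r * Real.log r⌉₊, ?_, fun H _ _ _ hH u hu => ?_⟩
  · have h₁ := Nat.ceil_lt_add_one (by positivity : 0 ≤ 6 * r * Real.log r)
    have h₂ := Nat.ceil_lt_add_one (by positivity : 0 ≤ 4096 * r * Real.log r)
    push_cast
    nlinarith
  have hQ := paQ_pow_mem_rowStochastic (r := r) (pow_eq_one_of_card_eq hH) (by omega)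
  have hmass := mass_weight_lt_le hp hH (by omega) (Nat.le_ceil _) hu
  have hmix : ∀ y ∉ {y : Fin r → H | 128 * weight y < r},
      ∑ w, |(paQ p r H ^ ⌈4096 * r * Real.log r⌉₊) y w - (Fintype.card (Fin r → H) : ℝ)⁻¹| ≤
        1 / 4 := by
    intro y hy
    refine (abs_le_of_sq_le_sq' ?_ (by norm_num)).2
    have herror' := herror _ (Nat.le_ceil _) (Nat.ceil_lt_add_one (by positivity)).le
    rw [abs_of_nonneg (Real.log_natCast_nonneg p)] at herror'
    exact (sq_sum_abs_paQ_pow_sub_le_of_weight hp hH (by omega) _ (not_lt.1 hy)).trans herror'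
  have hsplit := sum_abs_mul_sub_le (hQ ⌈6 * r * Real.log r⌉₊) (hQ _)
    (ν := fun _ => (Fintype.card (Fin r → H) : ℝ)⁻¹) (fun _ => by positivity) (by simp)
    (by norm_num) hmix u
  rw [pow_add]
  linarith

end PrimeOrderMixingTime

section HellingerShift

open scoped commutatorElement

variable {X G : Type*} [Fintype X] [Group G] [Fintype G]

lemma hellingerShift_mul_le (φ : X → ℝ) (e f : Equiv.Perm X) :
    hellingerShift φ (e * f) ≤ 2 * (hellingerShift φ e + hellingerShift φ f) := by
  have he : hellingerShift φ e = ∑ x, (√(φ (e (f x))) - √(φ (f x))) ^ 2 :=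
    (Equiv.sum_comp f fun x => (√(φ (e x)) - √(φ x)) ^ 2).symm
  rw [he]
  unfold hellingerShift
  rw [← sum_add_distrib, mul_sum]
  refine sum_le_sum fun x _ => ?_
  rw [Equiv.Perm.mul_apply]
  nlinarith [sq_nonneg ((√(φ (e (f x))) - √(φ (f x))) - (√(φ (f x)) - √(φ x)))]

lemma hellingerShift_inv (φ : X → ℝ) (e : Equiv.Perm X) :
    hellingerShift φ e⁻¹ = hellingerShift φ e := by
  unfold hellingerShift
  rw [← Equiv.sum_comp e]
  refine sum_congr rfl fun x _ => ?_
  rw [← Equiv.Perm.mul_apply, inv_mul_cancel, Equiv.Perm.one_apply]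
  ring

lemma hellingerShift_commutator_le (φ : X → ℝ) (e f : Equiv.Perm X) :
    hellingerShift φ ⁅e, f⁆ ≤ 8 * (hellingerShift φ e + hellingerShift φ f) := by
  have hinv := hellingerShift_mul_le φ e⁻¹ f⁻¹
  rw [hellingerShift_inv, hellingerShift_inv] at hinv
  calc hellingerShift φ ⁅e, f⁆ = hellingerShift φ (e * f * (e⁻¹ * f⁻¹)) := by
        rw [commutatorElement_def, mul_assoc (e * f)]
    _ ≤ 2 * (hellingerShift φ (e * f) + hellingerShift φ (e⁻¹ * f⁻¹)) :=
        hellingerShift_mul_le φ _ _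
    _ ≤ 8 * (hellingerShift φ e + hellingerShift φ f) := by
        linarith [hellingerShift_mul_le φ e f]

lemma entropyGap_eq_entropyDrop_add (σ : G →* Equiv.Perm X) (φ : X → ℝ) :
    entropyGap φ = entropyDrop σ φ + entropyGap (orbitAvg σ φ) := by
  have hmean : 𝔼 x, orbitAvg σ φ x = 𝔼 x, φ x := by
    rw [Fintype.expect_eq_sum_div_card, Fintype.expect_eq_sum_div_card, sum_orbitAvg]
  unfold entropyDrop entropyGap
  rw [hmean, sub_add_sub_cancel]

end HellingerShift

section ProductSpace

variable {A B G : Type*} [Fintype A] [Fintype B] [Group G] [Fintype G]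

lemma negEntropy_comp_fst (Φ : A → ℝ) :
    negEntropy (fun x : A × B => Φ x.1) = Fintype.card B * negEntropy Φ := by
  simp only [negEntropy, Fintype.sum_prod_type, sum_const, card_univ, nsmul_eq_mul, mul_sum]

lemma entropyGap_comp_fst [Nonempty B] (Φ : A → ℝ) :
    entropyGap (fun x : A × B => Φ x.1) = Fintype.card B * entropyGap Φ := by
  have hmean : 𝔼 x : A × B, Φ x.1 = 𝔼 x, Φ x := by
    rw [Fintype.expect_eq_sum_div_card, Fintype.expect_eq_sum_div_card, Fintype.sum_prod_type]
    simp only [sum_const, card_univ, nsmul_eq_mul, ← mul_sum, Fintype.card_prod, Nat.cast_mul]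
    rw [mul_comm (Fintype.card A : ℝ), mul_div_mul_left _ _ (by simp)]
  unfold entropyGap
  rw [hmean, negEntropy_comp_fst, negEntropy_comp_fst fun _ => 𝔼 x, Φ x, mul_sub]

lemma entropyDrop_comp_fst {σ : G →* Equiv.Perm (A × B)} {τ : G →* Equiv.Perm A}
    (hστ : ∀ a x, (σ a x).1 = τ a x.1) (Φ : A → ℝ) :
    entropyDrop σ (fun x => Φ x.1) = Fintype.card B * entropyDrop τ Φ := by
  have havg : orbitAvg σ (fun x => Φ x.1) = fun x => orbitAvg τ Φ x.1 := by
    funext x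
    simp only [orbitAvg, hστ]
  unfold entropyDrop
  rw [havg, negEntropy_comp_fst, negEntropy_comp_fst (orbitAvg τ Φ), mul_sub]

end ProductSpace

section Translation

variable {K V : Type*} [Ring K] [AddCommGroup V] [Module K V]

/-- The action of the scalars on a module in which `a` translates by `a • w`. -/
def smulTranslate (w : V) : Multiplicative K →* Equiv.Perm V :=
  permHom (fun a v => v + a.toAdd • w) (fun v => by simp) fun a b v => by
    rw [toAdd_mul, add_smul, add_comm (a.toAdd • w), add_assoc]

lemma smulTranslate_apply (w : V) (a : Multiplicative K) (v : V) :
    smulTranslate w a v = v + a.toAdd • w := rfl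

lemma commute_smulTranslate (w w' : V) (a b : Multiplicative K) :
    Commute (smulTranslate w a) (smulTranslate w' b) := by
  ext v
  simp only [Equiv.Perm.mul_apply, smulTranslate_apply]
  rw [add_right_comm]

lemma eq_of_smulTranslate_invariant {J : Type*} {w : J → V}
    (hw : Submodule.span K (Set.range w) = ⊤)
    {F : V → ℝ} (hF : ∀ j (a : Multiplicative K) v, F (smulTranslate (w j) a v) = F v) (v v' : V) :
    F v = F v' := by
  have hinv : ∀ u ∈ Submodule.span K (Set.range w), ∀ (a : K) v, F (v + a • u) = F v := by
    intro u hu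
    induction hu using Submodule.span_induction with
    | mem u hu =>
      obtain ⟨j, rfl⟩ := hu
      exact fun a v => hF j (Multiplicative.ofAdd a) v
    | zero => intro a v; rw [smul_zero, add_zero]
    | add x y _ _ hx hy => intro a v; rw [smul_add, ← add_assoc, hy, hx]
    | smul c x _ hx => intro a v; rw [smul_smul, hx]
  rw [← hinv (v - v') (hw ▸ Submodule.mem_top) 1 v', one_smul, add_sub_cancel]

lemma entropyGap_le_sum_entropyDrop_smulTranslate [Fintype K] [Fintype V] {J : Type*} [Fintype J]
    {w : J → V} (hw : Submodule.span K (Set.range w) = ⊤) {Φ : V → ℝ} (hΦ : ∀ v, 0 ≤ Φ v) :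
    entropyGap Φ ≤ ∑ j, entropyDrop (smulTranslate (K := K) (w j)) Φ :=
  entropyGap_le_sum_entropyDrop (fun _ _ _ => commute_smulTranslate _ _)
    (fun _ hF => eq_of_smulTranslate_invariant hw hF) hΦ

end Translation

section HeisenbergEntropy

open HeisData
open scoped commutatorElement

variable {p : ℕ} [Fact p.Prime] {W : Type*} [AddCommGroup W] [Module (ZMod p) W] [HeisData p W]

lemma heis_mul (x y : W × ZMod p) :
    x * y = (x.1 + y.1, x.2 + y.2 + (2 : ZMod p)⁻¹ * ω x.1 y.1) := rfl

lemma heis_one : (1 : W × ZMod p) = (0, 0) := rfl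

lemma heis_pow (hω : ∀ v : W, ω (p := p) v v = 0) (x : W × ZMod p) (n : ℕ) :
    x ^ n = ((n : ZMod p) • x.1, (n : ZMod p) * x.2) := by
  induction n with
  | zero => simp [heis_one]
  | succ n ih =>
    rw [pow_succ, ih, heis_mul]
    simp [hω, add_smul, add_mul]

lemma heis_pow_eq_one (hω : ∀ v : W, ω (p := p) v v = 0) (x : W × ZMod p) : x ^ p = 1 := by
  simp [heis_pow hω, heis_one]

lemma heis_mulPow_apply (hω : ∀ v : W, ω (p := p) v v = 0) (g : W × ZMod p)
    (a : Multiplicative (ZMod p)) (x : W × ZMod p) :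
    mulPow (heis_pow_eq_one hω) true g a x =
      (x.1 + a.toAdd • g.1, x.2 + a.toAdd * g.2 + (2 : ZMod p)⁻¹ * (a.toAdd * ω x.1 g.1)) := by
  change x * g ^ a.toAdd.val = _
  rw [heis_pow hω, ZMod.natCast_zmod_val, heis_mul, map_smul, smul_eq_mul]

/-- The action of the centre of the Heisenberg group by right multiplication. -/
abbrev centerMul (hω : ∀ v : W, ω (p := p) v v = 0) :
    Multiplicative (ZMod p) →* Equiv.Perm (W × ZMod p) :=
  mulPow (heis_pow_eq_one hω) true (0, 1)

lemma centerMul_apply (hω : ∀ v : W, ω (p := p) v v = 0) (a : Multiplicative (ZMod p))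
    (x : W × ZMod p) : centerMul hω a x = (x.1, x.2 + a.toAdd) := by
  simp [heis_mulPow_apply hω]

lemma commute_mulPow_centerMul (hω : ∀ v : W, ω (p := p) v v = 0) (g : W × ZMod p)
    (a b : Multiplicative (ZMod p)) :
    Commute (mulPow (heis_pow_eq_one hω) true g a) (centerMul hω b) := by
  ext1 x
  simp only [Equiv.Perm.mul_apply, centerMul_apply, heis_mulPow_apply hω g]
  exact Prod.ext rfl (by ring)

lemma orbitAvg_centerMul_apply (hω : ∀ v : W, ω (p := p) v v = 0) (φ : W × ZMod p → ℝ)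
    (x : W × ZMod p) : orbitAvg (centerMul hω) φ x = orbitAvg (centerMul hω) φ (x.1, 0) := by
  rw [← orbitAvg_apply_perm φ (Multiplicative.ofAdd x.2) (x.1, 0), centerMul_apply, toAdd_ofAdd,
    zero_add]

lemma ω_swap (hω : ∀ v : W, ω (p := p) v v = 0) (v w : W) : ω (p := p) w v = -ω v w :=
  ((show (ω : W →ₗ[ZMod p] W →ₗ[ZMod p] ZMod p).IsAlt from hω).neg v w).symm

lemma centerMul_eq_commutator (hp : p ≠ 2) (hω : ∀ v : W, ω (p := p) v v = 0) {x y : W × ZMod p}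
    (hxy : ω (p := p) x.1 y.1 ≠ 0) (s : Multiplicative (ZMod p)) :
    centerMul hω s = ⁅mulPow (heis_pow_eq_one hω) true y (Multiplicative.ofAdd 1),
      mulPow (heis_pow_eq_one hω) true x (Multiplicative.ofAdd (s.toAdd / ω x.1 y.1))⁆ := by
  have h2 : (2 : ZMod p) ≠ 0 := Ring.two_ne_zero (by rwa [ZMod.ringChar_zmod_n])
  rw [commutatorElement_def, eq_mul_inv_iff_mul_eq, eq_mul_inv_iff_mul_eq]
  ext1 h
  simp only [Equiv.Perm.mul_apply, centerMul_apply, heis_mulPow_apply hω x,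
    heis_mulPow_apply hω y, toAdd_ofAdd, map_add, map_smul, LinearMap.add_apply,
    LinearMap.smul_apply, smul_eq_mul, ω_swap hω x.1 y.1]
  refine Prod.ext (add_right_comm _ _ _) ?_
  field_simp
  ring

lemma exists_ω_ne_zero {J : Type*} {g : J → W × ZMod p}
    (hne : ∃ v w : W, ω (p := p) v w ≠ 0)
    (hg : Submodule.span (ZMod p) (Set.range fun j => (g j).1) = ⊤) :
    ∃ j k, ω (p := p) (g j).1 (g k).1 ≠ 0 := by
  by_contra! hzero
  obtain ⟨v, w, hvw⟩ := hne
  refine hvw (LinearMap.congr_fun₂ (g := 0) ?_ v w)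
  refine LinearMap.ext_on_range hg fun j => LinearMap.ext_on_range hg fun k => ?_
  exact hzero j k

variable [Fintype W] {φ : W × ZMod p → ℝ}

lemma entropyDrop_centerMul_le (hp : p ≠ 2) (hω : ∀ v : W, ω (p := p) v v = 0) {x y : W × ZMod p}
    (hxy : ω (p := p) x.1 y.1 ≠ 0) (hφ : ∀ x, 0 ≤ φ x) :
    entropyDrop (centerMul hω) φ ≤ 128 * p *
      (entropyDrop (mulPow (heis_pow_eq_one hω) true x) φ +
        entropyDrop (mulPow (heis_pow_eq_one hω) true y) φ) := by
  set D : ℝ := entropyDrop (mulPow (heis_pow_eq_one hω) true x) φ +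
    entropyDrop (mulPow (heis_pow_eq_one hω) true y) φ
  have hshift : ∀ s, hellingerShift φ (centerMul hω s) ≤ 32 * D := by
    intro s
    rw [centerMul_eq_commutator hp hω hxy s]
    linarith [hellingerShift_commutator_le φ (mulPow (heis_pow_eq_one hω) true y
        (Multiplicative.ofAdd 1))
        (mulPow (heis_pow_eq_one hω) true x (Multiplicative.ofAdd (s.toAdd / ω x.1 y.1))),
      hellingerShift_le_entropyDrop (σ := mulPow (heis_pow_eq_one hω) true y) hφ
        (Multiplicative.ofAdd 1),
      hellingerShift_le_entropyDrop (σ := mulPow (heis_pow_eq_one hω) true x) hφ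
        (Multiplicative.ofAdd (s.toAdd / ω x.1 y.1))]
  calc entropyDrop (centerMul hω) φ ≤ 4 * ∑ s, hellingerShift φ (centerMul hω s) :=
        entropyDrop_le_sum_hellingerShift hφ
    _ ≤ 4 * ∑ _s : Multiplicative (ZMod p), 32 * D := by gcongr; exact hshift _
    _ = 128 * p * D := by
        simp only [sum_const, card_univ, Fintype.card_multiplicative, ZMod.card, nsmul_eq_mul]
        ring

variable {J : Type*} [Fintype J] {g : J → W × ZMod p}

lemma entropyGap_orbitAvg_centerMul_le (hω : ∀ v : W, ω (p := p) v v = 0)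
    (hg : Submodule.span (ZMod p) (Set.range fun j => (g j).1) = ⊤) (hφ : ∀ x, 0 ≤ φ x) :
    entropyGap (orbitAvg (centerMul hω) φ) ≤
      ∑ j, entropyDrop (mulPow (heis_pow_eq_one hω) true (g j)) φ := by
  set Φ : W → ℝ := fun v => orbitAvg (centerMul hω) φ (v, 0)
  have hΦ : orbitAvg (centerMul hω) φ = fun x => Φ x.1 :=
    funext (orbitAvg_centerMul_apply hω φ)
  calc entropyGap (orbitAvg (centerMul hω) φ) = Fintype.card (ZMod p) * entropyGap Φ := by
        rw [hΦ, entropyGap_comp_fst]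
    _ ≤ Fintype.card (ZMod p) * ∑ j, entropyDrop (smulTranslate (K := ZMod p) (g j).1) Φ := by
        gcongr
        exact entropyGap_le_sum_entropyDrop_smulTranslate hg fun v => orbitAvg_nonneg hφ _
    _ = ∑ j, entropyDrop (mulPow (heis_pow_eq_one hω) true (g j)) (orbitAvg (centerMul hω) φ) := by
        rw [mul_sum, hΦ]
        refine sum_congr rfl fun j _ => (entropyDrop_comp_fst (fun a x => ?_) Φ).symm
        rw [heis_mulPow_apply hω]
        rfl
    _ ≤ ∑ j, entropyDrop (mulPow (heis_pow_eq_one hω) true (g j)) φ :=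
        sum_le_sum fun j _ => entropyDrop_orbitAvg_le (commute_mulPow_centerMul hω (g j)) hφ

-- The centre is generated by commutators of the `g j`, the quotient by the `g j` themselves.
theorem entropyGap_le_sum_entropyDrop_heis (hp : p ≠ 2) (hω : ∀ v : W, ω (p := p) v v = 0)
    (hne : ∃ v w : W, ω (p := p) v w ≠ 0)
    (hg : Submodule.span (ZMod p) (Set.range fun j => (g j).1) = ⊤) (hφ : ∀ x, 0 ≤ φ x) :
    entropyGap φ ≤
      (1 + 128 * p) * ∑ j, entropyDrop (mulPow (heis_pow_eq_one hω) true (g j)) φ := by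
  classical
  obtain ⟨j, k, hjk⟩ := exists_ω_ne_zero hne hg
  have hjk' : j ≠ k := by
    rintro rfl
    exact hjk (hω _)
  have hpair : entropyDrop (mulPow (heis_pow_eq_one hω) true (g j)) φ +
      entropyDrop (mulPow (heis_pow_eq_one hω) true (g k)) φ ≤
      ∑ j, entropyDrop (mulPow (heis_pow_eq_one hω) true (g j)) φ :=
    add_le_sum (f := fun j => entropyDrop (mulPow (heis_pow_eq_one hω) true (g j)) φ)
      (fun _ _ => entropyDrop_nonneg hφ) (mem_univ j) (mem_univ k) hjk'
  calc entropyGap φ = entropyDrop (centerMul hω) φ + entropyGap (orbitAvg (centerMul hω) φ) :=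
        entropyGap_eq_entropyDrop_add _ φ
    _ ≤ 128 * p * ∑ j, entropyDrop (mulPow (heis_pow_eq_one hω) true (g j)) φ +
          ∑ j, entropyDrop (mulPow (heis_pow_eq_one hω) true (g j)) φ := by
        gcongr
        · exact (entropyDrop_centerMul_le hp hω hjk hφ).trans (by gcongr)
        · exact entropyGap_orbitAvg_centerMul_le hω hg hφ
    _ = (1 + 128 * p) * ∑ j, entropyDrop (mulPow (heis_pow_eq_one hω) true (g j)) φ := by ring

end HeisenbergEntropy

section Pushforward

variable {X Y K G : Type*} [Fintype X] [DecidableEq X] [Fintype Y] [DecidableEq Y] [Fintype K]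
  [Group G] [Fintype G] {σ : K → G →* Equiv.Perm X} {τ : K → G →* Equiv.Perm Y} {f : X → Y}

lemma lazyKernel_pow_mulVec_comp (hf : ∀ k a x, f (σ k a x) = τ k a (f x)) (t : ℕ) (F : Y → ℝ) :
    lazyKernel σ ^ t *ᵥ (F ∘ f) = (lazyKernel τ ^ t *ᵥ F) ∘ f := by
  induction t generalizing F with
  | zero => simp
  | succ t ih =>
    have hstep : lazyKernel σ *ᵥ (F ∘ f) = (lazyKernel τ *ᵥ F) ∘ f := by
      funext x
      simp only [lazyKernel_mulVec, Function.comp_apply, orbitAvg, hf]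
    rw [pow_succ, ← Matrix.mulVec_mulVec, hstep, ih, pow_succ, ← Matrix.mulVec_mulVec]

lemma mass_lazyKernel_pow_preimage (hf : ∀ k a x, f (σ k a x) = τ k a (f x)) (t : ℕ) (x : X)
    (E : Set Y) :
    mass ((lazyKernel σ ^ t) x) (f ⁻¹' E) = mass ((lazyKernel τ ^ t) (f x)) E := by
  rw [← mulVec_indicator_one, ← mulVec_indicator_one]
  exact congrFun (lazyKernel_pow_mulVec_comp hf t (E.indicator 1)) x

end Pushforward

section TuplePushforward

variable {p r : ℕ} [Fact p.Prime] {H H' : Type*} [Group H] [Group H'] (θ : H →* H')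

lemma map_mulPow (hexp : ∀ g : H, g ^ p = 1) (hexp' : ∀ g : H', g ^ p = 1)
    (right : Bool) (g x : H) (a : Multiplicative (ZMod p)) :
    θ (mulPow hexp right g a x) = mulPow hexp' right (θ g) a (θ x) := by
  cases right
  · exact (map_mul θ _ _).trans (congrArg (· * θ x) (map_pow θ g _))
  · exact (map_mul θ _ _).trans (congrArg (θ x * ·) (map_pow θ g _))

lemma comp_tupleMove (hexp : ∀ g : H, g ^ p = 1) (hexp' : ∀ g : H', g ^ p = 1)
    (k : MoveIndex r) (a : Multiplicative (ZMod p)) (g : Fin r → H) :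
    θ ∘ tupleMove hexp k a g = tupleMove hexp' k a (θ ∘ g) := by
  rw [tupleMove_apply, tupleMove_apply, Function.comp_update, map_mulPow θ hexp hexp']
  rfl

variable [Fintype H] [DecidableEq H] [Fintype H'] [DecidableEq H']

lemma mass_paQ_pow_comp (hexp : ∀ g : H, g ^ p = 1) (hexp' : ∀ g : H', g ^ p = 1)
    (hr : 2 ≤ r) (t : ℕ) (x : Fin r → H) (E : Set (Fin r → H')) :
    mass ((paQ p r H ^ t) x) {g | θ ∘ g ∈ E} = mass ((paQ p r H' ^ t) (θ ∘ x)) E := by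
  rw [paQ_eq_lazyKernel hexp hr, paQ_eq_lazyKernel hexp' hr]
  exact mass_lazyKernel_pow_preimage (f := (θ ∘ · : (Fin r → H) → Fin r → H'))
    (comp_tupleMove θ hexp hexp') t x E

end TuplePushforward

section TrivialCoordinates

lemma expect_indicator_forall_mem_eq_one {ι H : Type*} [Fintype ι] [DecidableEq ι] [Fintype H]
    [Group H] (S : Finset ι) :
    𝔼 w : ι → H, {w : ι → H | ∀ j ∈ S, w j = 1}.indicator (1 : (ι → H) → ℝ) w =
      (Fintype.card H : ℝ)⁻¹ ^ #S := by
  classical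
  have hH : (Fintype.card H : ℝ) ≠ 0 := by exact_mod_cast Fintype.card_ne_zero
  have hbox : ({w | ∀ j ∈ S, w j = 1} : Finset (ι → H)) =
      Fintype.piFinset fun j => if j ∈ S then {1} else univ := by
    ext w
    simp only [mem_filter_univ, Fintype.mem_piFinset]
    exact forall_congr' fun j => by split_ifs with hj <;> simp [hj]
  have hcard : (#{w : ι → H | ∀ j ∈ S, w j = 1} : ℝ) =
      ∏ j, Fintype.card H * if j ∈ S then (Fintype.card H : ℝ)⁻¹ else 1 := by
    rw [hbox, Fintype.card_piFinset, Nat.cast_prod]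
    exact prod_congr rfl fun j _ => by split_ifs <;> simp [hH]
  rw [Fintype.expect_eq_sum_div_card]
  simp only [Set.indicator_apply, Set.mem_ofPred_eq, Pi.one_apply, sum_boole]
  rw [hcard, prod_mul_distrib, prod_const, prod_ite_mem, univ_inter, prod_const, Fintype.card_fun,
    card_univ, Nat.cast_pow, mul_div_cancel_left₀ _ (pow_ne_zero _ hH)]

lemma card_le_two_mul_ncard_ne {X : Type*} [Fintype X] [Nontrivial X] (x : X) :
    Fintype.card X ≤ 2 * {y | y ≠ x}.ncard := by
  classical
  have hcard : {y | y ≠ x}.ncard = Fintype.card X - 1 := by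
    rw [Set.ncard_eq_toFinset_card', Set.toFinset_card, Set.card_ne_eq]
  have := Fintype.one_lt_card (α := X)
  omega

lemma mass_paQ_pow_forall_mem_eq_one_le {p r : ℕ} [Fact p.Prime] {H : Type*} [Group H] [Fintype H]
    [DecidableEq H] (hH : Fintype.card H = p) (hr : 2 ≤ r) {T : ℕ} (hT : HalfMixed p r H T)
    (S : Finset (Fin r)) {k t : ℕ} (ht : k * T ≤ t) {u : Fin r → H} (hu : u ≠ 1) :
    mass ((paQ p r H ^ t) u) {w | ∀ j ∈ S, w j = 1} ≤ 2 * (p : ℝ)⁻¹ ^ #S + (1 / 2) ^ k := by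
  have hexp := pow_eq_one_of_card_eq hH
  have : Nontrivial H := Fintype.one_lt_card_iff_nontrivial.1 (hH ▸ (Fact.out : p.Prime).one_lt)
  have : Nonempty (Fin r) := ⟨⟨0, by omega⟩⟩
  have hmean := expect_indicator_forall_mem_eq_one (H := H) S
  rw [hH] at hmean
  rw [← mulVec_indicator_one, ← hmean]
  exact pow_mulVec_le_of_mixing (paQ_mem_doublyStochastic hexp hr) (isAbsorbing_ne_one hexp hr)
    (card_le_two_mul_ncard_ne 1) hT (Set.indicator_nonneg fun _ _ => zero_le_one)
    (Set.indicator_le_self' fun _ _ => zero_le_one) ht hu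

end TrivialCoordinates

section HeisenbergSpan

open HeisData

variable {p r : ℕ} [Fact p.Prime] {W : Type*} [AddCommGroup W] [Module (ZMod p) W] [HeisData p W]

/-- The homomorphism from the Heisenberg group to `ZMod p` induced by a linear functional on `W`. -/
def dualHom (ξ : Module.Dual (ZMod p) W) : W × ZMod p →* Multiplicative (ZMod p) where
  toFun x := Multiplicative.ofAdd (ξ x.1)
  map_one' := by simp [heis_one]
  map_mul' x y := by simp [heis_mul]

lemma dualHom_eq_one_iff {ξ : Module.Dual (ZMod p) W} {x : W × ZMod p} :
    dualHom ξ x = 1 ↔ ξ x.1 = 0 := ofAdd_eq_one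

lemma dualHom_comp_ne_one {ξ : Module.Dual (ZMod p) W} (hξ : ξ ≠ 0) {x : Fin r → W × ZMod p}
    (hx : x ∈ genSet r (W × ZMod p)) : dualHom ξ ∘ x ≠ 1 := by
  intro h
  have hker : Subgroup.closure (Set.range x) ≤ (dualHom ξ).ker := by
    rw [Subgroup.closure_le]
    rintro _ ⟨i, rfl⟩
    exact congrFun h i
  refine hξ (LinearMap.ext fun w => ?_)
  exact dualHom_eq_one_iff.1 (hker ((show Subgroup.closure (Set.range x) = ⊤ from hx) ▸
    Subgroup.mem_top ((w, 0) : W × ZMod p)))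

lemma mass_dualHom_eq_one_on_le [Fintype W] [DecidableEq W] (hω : ∀ v : W, ω (p := p) v v = 0)
    (hr : 2 ≤ r) {T : ℕ} (hT : HalfMixed p r (Multiplicative (ZMod p)) T)
    (S : Finset (Fin r)) {k t : ℕ} (ht : k * T ≤ t) {x : Fin r → W × ZMod p}
    (hx : x ∈ genSet r (W × ZMod p)) {ξ : Module.Dual (ZMod p) W} (hξ : ξ ≠ 0) :
    mass ((paQ p r (W × ZMod p) ^ t) x) {g | dualHom ξ ∘ g ∈ {w | ∀ j ∈ S, w j = 1}} ≤
      2 * (p : ℝ)⁻¹ ^ #S + (1 / 2) ^ k := by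
  have hcard : Fintype.card (Multiplicative (ZMod p)) = p := by
    rw [Fintype.card_multiplicative, ZMod.card]
  rw [mass_paQ_pow_comp (dualHom ξ) (heis_pow_eq_one hω) (pow_eq_one_of_card_eq hcard) hr]
  exact mass_paQ_pow_forall_mem_eq_one_le hcard hr hT S ht (dualHom_comp_ne_one hξ hx)

-- If the components do not span, some nonzero functional vanishes on all of them.
lemma mass_span_ne_top_le [Fintype W] [DecidableEq W] (hω : ∀ v : W, ω (p := p) v v = 0)
    (hr : 2 ≤ r) {T : ℕ} (hT : HalfMixed p r (Multiplicative (ZMod p)) T)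
    (S : Finset (Fin r)) {k t : ℕ} (ht : k * T ≤ t) {x : Fin r → W × ZMod p}
    (hx : x ∈ genSet r (W × ZMod p)) :
    mass ((paQ p r (W × ZMod p) ^ t) x)
        {g | Submodule.span (ZMod p) ((fun j => (g j).1) '' (S : Set (Fin r))) ≠ ⊤} ≤
      p ^ Module.finrank (ZMod p) W * (2 * (p : ℝ)⁻¹ ^ #S + (1 / 2) ^ k) := by
  classical
  have : Finite (Module.Dual (ZMod p) W) := Module.finite_of_finite (ZMod p)
  have := Fintype.ofFinite (Module.Dual (ZMod p) W)
  have hq : ∀ g, 0 ≤ (paQ p r (W × ZMod p) ^ t) x g := fun g =>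
    Matrix.nonneg_of_mem_rowStochastic (paQ_pow_mem_rowStochastic (heis_pow_eq_one hω) hr t)
  have hcover : {g : Fin r → W × ZMod p |
      Submodule.span (ZMod p) ((fun j => (g j).1) '' (S : Set (Fin r))) ≠ ⊤} ⊆
      ⋃ ξ ∈ ({ξ | ξ ≠ 0} : Finset (Module.Dual (ZMod p) W)),
        {g | dualHom ξ ∘ g ∈ {w | ∀ j ∈ S, w j = 1}} := by
    intro g hg
    obtain ⟨ξ, hξ, hker⟩ := Submodule.exists_le_ker_of_lt_top _ (lt_top_iff_ne_top.2 hg)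
    refine Set.mem_biUnion (by simpa using hξ) fun j hj => dualHom_eq_one_iff.2 ?_
    exact hker (Submodule.subset_span ⟨j, hj, rfl⟩)
  calc _ ≤ _ := (mass_mono hq hcover).trans (mass_biUnion_le hq _ _)
    _ ≤ _ := sum_le_card_nsmul _ _ _ fun ξ hξ =>
        mass_dualHom_eq_one_on_le hω hr hT S ht hx (by simpa using hξ)
    _ ≤ Fintype.card (Module.Dual (ZMod p) W) * (2 * (p : ℝ)⁻¹ ^ #S + (1 / 2) ^ k) := by
        rw [nsmul_eq_mul]
        gcongr
        exact card_le_univ _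
    _ = _ := by
        rw [Module.card_eq_pow_finrank (K := ZMod p), ZMod.card, Subspace.dual_finrank_eq,
          Nat.cast_pow]

end HeisenbergSpan

section HeisenbergMixing

open HeisData

variable {p r : ℕ} [Fact p.Prime] {W : Type*} [AddCommGroup W] [Module (ZMod p) W] [HeisData p W]
  [Fintype W] {L : Type*} [Fintype L]

-- Each class of the colouring `c` controls the entropy on its own, and the classes are disjoint.
lemma localEntropyBound_heis (hp : p ≠ 2) (hω : ∀ v : W, ω (p := p) v v = 0)
    (hne : ∃ v w : W, ω (p := p) v w ≠ 0) (c : Fin r → L) {i : Fin r} {g : Fin r → W × ZMod p}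
    (hg : ∀ l, Submodule.span (ZMod p) ((fun j => (g j).1) '' {j | j ≠ i ∧ c j = l}) = ⊤) :
    LocalEntropyBound (heis_pow_eq_one hω) (Fintype.card L / (1 + 128 * p)) i g := by
  classical
  intro φ hφ
  set D : {j // j ≠ i} → ℝ := fun j => entropyDrop (mulPow (heis_pow_eq_one hω) true (g j)) φ
  have hclass : ∀ l, entropyGap φ ≤
      (1 + 128 * p) * ∑ j : {j : {j // j ≠ i} // c j = l}, D j := by
    intro l
    refine entropyGap_le_sum_entropyDrop_heis hp hω hne
      (g := fun j : {j : {j // j ≠ i} // c j = l} => g j) ?_ hφ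
    rw [← hg l]
    congr 1
    ext v
    simp [and_assoc, and_left_comm]
  rw [div_mul_eq_mul_div, div_le_iff₀' (by positivity)]
  calc Fintype.card L * entropyGap φ = ∑ _l : L, entropyGap φ := by simp
    _ ≤ ∑ l, (1 + 128 * p) * ∑ j : {j : {j // j ≠ i} // c j = l}, D j :=
        sum_le_sum fun l _ => hclass l
    _ = (1 + 128 * p) * ∑ j, D j := by
        rw [← mul_sum, Fintype.sum_fiberwise (fun j : {j // j ≠ i} => c j) D]

variable [DecidableEq W] [DecidableEq L]

lemma mass_not_localEntropyBound_heis_le (hp : p ≠ 2) (hω : ∀ v : W, ω (p := p) v v = 0)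
    (hne : ∃ v w : W, ω (p := p) v w ≠ 0) (hr : 2 ≤ r) {T : ℕ}
    (hT : HalfMixed p r (Multiplicative (ZMod p)) T) {x : Fin r → W × ZMod p}
    (hx : x ∈ genSet r (W × ZMod p)) {c : Fin r → L} {d : ℕ} {i : Fin r}
    (hc : ∀ l, d ≤ #{j | j ≠ i ∧ c j = l}) {k t : ℕ} (ht : k * T ≤ t) :
    mass ((paQ p r (W × ZMod p) ^ t) x)
        {g | ¬LocalEntropyBound (heis_pow_eq_one hω) (Fintype.card L / (1 + 128 * p)) i g} ≤
      Fintype.card L *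
        (p ^ Module.finrank (ZMod p) W * (2 * (p : ℝ)⁻¹ ^ d + (1 / 2) ^ k)) := by
  have hp1 : (p : ℝ)⁻¹ ≤ 1 := Nat.cast_inv_le_one p
  have hq : ∀ g, 0 ≤ (paQ p r (W × ZMod p) ^ t) x g := fun g =>
    Matrix.nonneg_of_mem_rowStochastic (paQ_pow_mem_rowStochastic (heis_pow_eq_one hω) hr t)
  have hcover : {g : Fin r → W × ZMod p |
      ¬LocalEntropyBound (heis_pow_eq_one hω) (Fintype.card L / (1 + 128 * p)) i g} ⊆
      ⋃ l ∈ (univ : Finset L), {g | Submodule.span (ZMod p) ((fun j => (g j).1) ''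
        (({j | j ≠ i ∧ c j = l} : Finset (Fin r)) : Set (Fin r))) ≠ ⊤} := by
    intro g hg
    by_contra hspan
    refine hg (localEntropyBound_heis hp hω hne c fun l => ?_)
    simpa using fun h => hspan (Set.mem_biUnion (mem_univ l) h)
  have hclass : ∀ l ∈ (univ : Finset L), mass ((paQ p r (W × ZMod p) ^ t) x)
      {g | Submodule.span (ZMod p) ((fun j => (g j).1) ''
        (({j | j ≠ i ∧ c j = l} : Finset (Fin r)) : Set (Fin r))) ≠ ⊤} ≤
      p ^ Module.finrank (ZMod p) W * (2 * (p : ℝ)⁻¹ ^ d + (1 / 2) ^ k) := by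
    intro l _
    refine (mass_span_ne_top_le hω hr hT _ ht hx).trans ?_
    gcongr _ * (2 * ?_ + _)
    exact pow_le_pow_of_le_one (by positivity) hp1 (hc l)
  refine ((mass_mono hq hcover).trans (mass_biUnion_le hq _ _)).trans ?_
  simpa using sum_le_card_nsmul _ _ _ hclass

lemma sq_sum_abs_paQ_pow_sub_le_heis (hp : p ≠ 2) (hω : ∀ v : W, ω (p := p) v v = 0)
    (hne : ∃ v w : W, ω (p := p) v w ≠ 0) (hr : 2 ≤ r) {T : ℕ}
    (hT : HalfMixed p r (Multiplicative (ZMod p)) T) {x : Fin r → W × ZMod p}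
    (hx : x ∈ genSet r (W × ZMod p)) (hL : Fintype.card L ≤ r) {c : Fin r → L} {d : ℕ}
    (hc : ∀ i l, d ≤ #{j | j ≠ i ∧ c j = l}) (k T' : ℕ) :
    (∑ g, |(paQ p r (W × ZMod p) ^ (k * T + T')) x g -
        (Fintype.card (Fin r → W × ZMod p) : ℝ)⁻¹|) ^ 2 ≤
      4 * (Real.exp (-(Fintype.card L / (1 + 128 * p) / (4 * r * ((r : ℝ) - 1)) * T')) *
          (r * Real.log (Fintype.card (W × ZMod p))) +
        Real.log (Fintype.card (W × ZMod p)) * (r * (Fintype.card L *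
          (p ^ Module.finrank (ZMod p) W * (2 * (p : ℝ)⁻¹ ^ d + (1 / 2) ^ k))))) := by
  have hr' : (2 : ℝ) ≤ r := by exact_mod_cast hr
  have : 0 ≤ Real.log (Fintype.card (W × ZMod p)) := Real.log_natCast_nonneg _
  have hrate : (Fintype.card L : ℝ) / (1 + 128 * p) / (4 * r * ((r : ℝ) - 1)) ≤ 1 := by
    have hL' : (Fintype.card L : ℝ) ≤ r := by exact_mod_cast hL
    have hκ : (Fintype.card L : ℝ) / (1 + 128 * p) ≤ Fintype.card L :=
      div_le_self (by positivity) (by linarith [(Nat.cast_nonneg p : (0 : ℝ) ≤ p)])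
    exact (div_le_one (by nlinarith)).2 (by nlinarith)
  refine sq_sum_abs_paQ_pow_sub_le (heis_pow_eq_one hω) hr (by positivity) hrate x (by positivity)
    fun t ht _ => ?_
  gcongr
  refine (sum_le_sum fun i _ =>
    mass_not_localEntropyBound_heis_le hp hω hne hr hT hx (hc i) ht).trans_eq ?_
  simp

lemma isAbsorbing_genSet {H : Type*} [Group H] [Fintype H] [DecidableEq H]
    (hexp : ∀ g : H, g ^ p = 1) (hr : 2 ≤ r) : IsAbsorbing (paQ p r H) (genSet r H) := by
  rw [paQ_eq_lazyKernel hexp hr]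
  exact isAbsorbing_lazyKernel fun _ _ _ => mem_genSet_of_tupleMove_mem hexp

lemma mixTime_paQ_le {H : Type*} [Group H] [Fintype H] [DecidableEq H]
    (hexp : ∀ g : H, g ^ p = 1) (hr : 2 ≤ r) {t : ℕ}
    (ht : ∀ x ∈ genSet r H,
      (∑ g, |(paQ p r H ^ t) x g - (Fintype.card (Fin r → H) : ℝ)⁻¹|) ^ 2 ≤ 1 / 16) :
    mixTime (paQ p r H) (unifOn (genSet r H)) (genSet r H) ≤ t := by
  refine Nat.sInf_le fun x hx => ?_
  refine (tvDist_unifOn_le ⟨x, hx⟩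
    (Matrix.sum_row_of_mem_rowStochastic (paQ_pow_mem_rowStochastic hexp hr t) x)
    ((isAbsorbing_genSet hexp hr).pow t x hx)).trans ?_
  exact (abs_le_of_sq_le_sq' ((ht x hx).trans_eq (by norm_num)) (by norm_num)).2

end HeisenbergMixing

section Parameters

open Filter HeisData

lemma exists_coloring_le_card {r N d : ℕ} (hN : 0 < N) (hr : N * (d + 1) ≤ r) :
    ∃ c : Fin r → Fin N, ∀ i l, d ≤ #{j | j ≠ i ∧ c j = l} := by
  let c : Fin r → Fin N := fun j => ⟨j % N, Nat.mod_lt _ hN⟩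
  refine ⟨c, fun i l => ?_⟩
  have hlt : ∀ a : Fin (d + 1), l + N * a < r := fun a =>
    calc l + N * a < N * (a + 1) := by rw [mul_add_one]; omega
      _ ≤ r := (Nat.mul_le_mul_left N (by omega)).trans hr
  have hclass : d + 1 ≤ #{j | c j = l} := by
    rw [← card_fin (d + 1)]
    refine card_le_card_of_injOn (fun a => ⟨l + N * a, hlt a⟩) (fun a _ => ?_) fun a _ b _ hab => ?_
    · simp [c, Fin.ext_iff, Nat.mod_eq_of_lt l.2]
    · simpa [Fin.ext_iff, hN.ne'] using hab
  rw [← filter_filter, filter_ne', filter_erase]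
  exact (Nat.le_sub_one_of_lt hclass).trans pred_card_le_card_erase

lemma exp_neg_natCast_mul_log {x : ℝ} (hx : 0 < x) (n : ℕ) :
    Real.exp (-(n * Real.log x)) = (x ^ n)⁻¹ := by
  rw [Real.exp_neg, Real.exp_nat_mul, Real.exp_log hx]

lemma pow_mul_inv_pow_add_le {q x : ℝ} (hq : 3 ≤ q) (hx : 0 < x) {n c : ℕ}
    (hc : n * Real.log x ≤ c) (h : ℕ) : q ^ h * q⁻¹ ^ (h + c) ≤ (x ^ n)⁻¹ := by
  have hq_inv : q⁻¹ ≤ Real.exp (-1) := by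
    rw [Real.exp_neg]
    exact inv_anti₀ (Real.exp_pos _) (by linarith [Real.exp_one_lt_d9])
  calc q ^ h * q⁻¹ ^ (h + c) = q⁻¹ ^ c := by
        rw [pow_add, ← mul_assoc, ← mul_pow, mul_inv_cancel₀ (by linarith), one_pow, one_mul]
    _ ≤ Real.exp (-1) ^ c := pow_le_pow_left₀ (by positivity) hq_inv c
    _ = Real.exp (-c) := by rw [← Real.exp_nat_mul, mul_neg_one]
    _ ≤ Real.exp (-(n * Real.log x)) := Real.exp_le_exp.2 (neg_le_neg hc)
    _ = (x ^ n)⁻¹ := exp_neg_natCast_mul_log hx n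

lemma pow_mul_half_pow_le {q x : ℝ} (hq : 0 < q) (hx : 0 < x) {h n k : ℕ}
    (hk : 2 * (h * Real.log q + n * Real.log x) ≤ k) : q ^ h * (1 / 2) ^ k ≤ (x ^ n)⁻¹ := by
  have hhalf : (1 / 2 : ℝ) ≤ Real.exp (-(1 / 2)) := by
    linarith [Real.add_one_le_exp (-(1 / 2) : ℝ)]
  calc q ^ h * (1 / 2) ^ k ≤ q ^ h * Real.exp (-(1 / 2)) ^ k := by gcongr
    _ = Real.exp (h * Real.log q + k * -(1 / 2)) := by
        rw [Real.exp_add, Real.exp_nat_mul, Real.exp_log hq, ← Real.exp_nat_mul]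
    _ ≤ Real.exp (-(n * Real.log x)) := Real.exp_le_exp.2 (by linarith)
    _ = (x ^ n)⁻¹ := exp_neg_natCast_mul_log hx n

lemma three_mul_log_le_rate_mul {A b x N s : ℝ} (hA : 0 < A) (hx : 1 < x) (hN : 0 ≤ N)
    (hxN : x ≤ 2 * b * N) (hs : 24 * A * b * x * Real.log x ≤ s) :
    3 * Real.log x ≤ N / A / (4 * x * (x - 1)) * s := by
  have hlog : 0 ≤ Real.log x := Real.log_nonneg hx.le
  have hden : 0 < 4 * x * (x - 1) := by nlinarith
  rw [div_div, div_mul_eq_mul_div, le_div_iff₀ (mul_pos hA hden)]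
  calc 3 * Real.log x * (A * (4 * x * (x - 1))) = 12 * A * x * Real.log x * (x - 1) := by ring
    _ ≤ 12 * A * x * Real.log x * (2 * b * N) := by gcongr; linarith
    _ = N * (24 * A * b * x * Real.log x) := by ring
    _ ≤ N * s := by gcongr

lemma four_mul_entropy_add_escape_le {x y N e f ℓ : ℝ} (hx : 1 ≤ x) (hℓ : 0 ≤ ℓ) (hy : 0 ≤ y)
    (hyx : y ≤ x) (hN : 0 ≤ N) (hNx : N ≤ x) (he : e ≤ (x ^ 3)⁻¹) (hf : f ≤ 3 * (x ^ 5)⁻¹)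
    (hx_large : 256 * ℓ ≤ x) :
    4 * (e * (x * (y * ℓ)) + y * ℓ * (x * (N * f))) ≤ 1 / 16 := by
  have hℓx : ℓ / x ≤ 1 / 256 := by rw [div_le_div_iff₀ (by linarith) (by norm_num)]; linarith
  have hentropy : e * (x * (y * ℓ)) ≤ ℓ / x :=
    calc e * (x * (y * ℓ)) ≤ (x ^ 3)⁻¹ * (x * (x * ℓ)) := by gcongr
      _ = ℓ / x := by field_simp
  have hescape : y * ℓ * (x * (N * f)) ≤ 3 * (ℓ / x) :=
    calc y * ℓ * (x * (N * f)) ≤ y * ℓ * (x * (N * (3 * (x ^ 5)⁻¹))) := by gcongr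
      _ ≤ x * ℓ * (x * (x * (3 * (x ^ 5)⁻¹))) := by gcongr
      _ = 3 * (ℓ / x) * (1 / x) := by field_simp
      _ ≤ 3 * (ℓ / x) := mul_le_of_le_one_right (by positivity) ((div_le_one (by linarith)).2 hx)
  linarith

lemma le_two_mul_mul_div {b r : ℕ} (hb : 0 < b) (hbr : b ≤ r) : r ≤ 2 * b * (r / b) := by
  have hdiv : 1 ≤ r / b := (Nat.one_le_div_iff hb).2 hbr
  have hlt : r < b * (r / b + 1) := Nat.lt_mul_div_succ r hb
  nlinarith

variable {p r : ℕ} [Fact p.Prime] {W : Type*} [AddCommGroup W] [Module (ZMod p) W]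

lemma exists_ω_ne_zero_of_nondegenerate [HeisData p W]
    (hW : 0 < Module.finrank (ZMod p) W) (hω : ∀ v : W, (∀ w : W, ω (p := p) v w = 0) → v = 0) :
    ∃ v w : W, ω (p := p) v w ≠ 0 := by
  have : Nontrivial W := Module.nontrivial_of_finrank_pos (R := ZMod p) hW
  obtain ⟨v, hv⟩ := exists_ne (0 : W)
  by_contra! hzero
  exact hv (hω v (hzero v))

variable [Fintype W]

lemma log_card_prod_zmod : Real.log (Fintype.card (W × ZMod p)) =
    (Module.finrank (ZMod p) W + 1) * Real.log p := by
  rw [Fintype.card_prod, ZMod.card, ← Nat.card_eq_fintype_card (α := W),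
    Module.natCard_eq_pow_finrank (K := ZMod p), Nat.card_zmod, ← pow_succ, Nat.cast_pow,
    Real.log_pow, Nat.cast_succ]

variable [DecidableEq W] [HeisData p W]

lemma mixTime_paQ_heis_le (hp : p ≠ 2) (hω : ∀ v : W, ω (p := p) v v = 0)
    (hne : ∃ v w : W, ω (p := p) v w ≠ 0) (hr : 2 ≤ r) (hrp : 256 * Real.log p ≤ r) {T : ℕ}
    (hT : HalfMixed p r (Multiplicative (ZMod p)) T) {c k T' : ℕ} (hc : 5 * Real.log r ≤ c)
    (hbr : Module.finrank (ZMod p) W + c + 1 ≤ r)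
    (hk : 2 * (Module.finrank (ZMod p) W * Real.log p + 5 * Real.log r) ≤ k)
    (hT' : 24 * (1 + 128 * p) * (Module.finrank (ZMod p) W + c + 1 : ℕ) * r * Real.log r ≤ T') :
    mixTime (paQ p r (W × ZMod p)) (unifOn (genSet r (W × ZMod p))) (genSet r (W × ZMod p)) ≤
      k * T + T' := by
  set h := Module.finrank (ZMod p) W
  have hp3 : (3 : ℝ) ≤ p := by
    exact_mod_cast (Fact.out : p.Prime).two_le.lt_of_ne' hp
  have hr2 : (2 : ℝ) ≤ r := by exact_mod_cast hr
  have hNr : r / (h + c + 1) ≤ r := Nat.div_le_self _ _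
  obtain ⟨col, hcol⟩ := exists_coloring_le_card (Nat.div_pos hbr (by omega))
    (Nat.div_mul_le_self r (h + c + 1))
  have hrate := three_mul_log_le_rate_mul (A := 1 + 128 * p) (N := (r / (h + c + 1) : ℕ))
    (by positivity) (by linarith) (by positivity)
    (by exact_mod_cast le_two_mul_mul_div (Nat.succ_pos _) hbr) hT'
  have hexp : Real.exp (-((r / (h + c + 1) : ℕ) / (1 + 128 * (p : ℝ)) /
      (4 * r * ((r : ℝ) - 1)) * T')) ≤ ((r : ℝ) ^ 3)⁻¹ := by
    rw [← exp_neg_natCast_mul_log (by linarith)]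
    exact Real.exp_le_exp.2 (neg_le_neg (by exact_mod_cast hrate))
  have hescape : (p : ℝ) ^ h * (2 * (p : ℝ)⁻¹ ^ (h + c) + (1 / 2) ^ k) ≤ 3 * ((r : ℝ) ^ 5)⁻¹ := by
    have hspan := pow_mul_inv_pow_add_le (x := r) (n := 5) hp3 (by linarith)
      (by exact_mod_cast hc) h
    have hmix := pow_mul_half_pow_le (q := p) (x := r) (h := h) (n := 5) (by linarith)
      (by linarith) (by exact_mod_cast hk)
    linarith
  refine mixTime_paQ_le (heis_pow_eq_one hω) hr fun x hx => ?_
  refine (sq_sum_abs_paQ_pow_sub_le_heis hp hω hne hr hT hx (by simpa using hNr) hcol k T').trans ?_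
  rw [log_card_prod_zmod, Fintype.card_fin]
  exact four_mul_entropy_add_escape_le (by linarith) (Real.log_natCast_nonneg p) (by positivity)
    (by exact_mod_cast (by omega : h + 1 ≤ r)) (by positivity) (by exact_mod_cast hNr) hexp hescape
    hrp

/-- A constant `C` depending only on `p` for which the mixing time is at most
`C * r * (h + log r) * log r`. -/
def mixConst (p : ℕ) : ℝ := 5000 * (2 * Real.log p + 11) + 168 * (1 + 128 * p) + 1

lemma mixConst_pos (p : ℕ) : 0 < mixConst p := by
  have : 0 ≤ Real.log p := Real.log_natCast_nonneg p
  unfold mixConst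
  positivity

lemma mul_add_le_mixConst_mul {p r h c k T T' : ℕ} (hr : 3 ≤ r) (hc : (c : ℝ) ≤ 5 * Real.log r + 1)
    (hk : (k : ℝ) ≤ 2 * (h * Real.log p + 5 * Real.log r) + 1)
    (hT : (T : ℝ) ≤ 5000 * r * Real.log r)
    (hT' : (T' : ℝ) ≤ 24 * (1 + 128 * p) * (h + c + 1 : ℕ) * r * Real.log r + 1) :
    ((k * T + T' : ℕ) : ℝ) ≤ mixConst p * r * (h + Real.log r) * Real.log r := by
  have hr3 : (3 : ℝ) ≤ r := by exact_mod_cast hr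
  have : (0 : ℝ) ≤ h := h.cast_nonneg
  have hlogp : 0 ≤ Real.log p := Real.log_natCast_nonneg p
  have hlogr : 1 ≤ Real.log r := one_le_log_of_three_le hr3
  have hk' : (k : ℝ) ≤ (2 * Real.log p + 11) * (h + Real.log r) := by nlinarith
  have hb : ((h + c + 1 : ℕ) : ℝ) ≤ 7 * (h + Real.log r) := by push_cast; linarith
  have hone : 1 ≤ r * (h + Real.log r) * Real.log r :=
    one_le_mul_of_one_le_of_one_le
      (one_le_mul_of_one_le_of_one_le (by linarith) (by linarith)) hlogr
  calc ((k * T + T' : ℕ) : ℝ) = k * T + T' := by push_cast; ring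
    _ ≤ (2 * Real.log p + 11) * (h + Real.log r) * (5000 * r * Real.log r) +
        (24 * (1 + 128 * p) * (7 * (h + Real.log r)) * r * Real.log r +
          r * (h + Real.log r) * Real.log r) := by
      gcongr
      exact hT'.trans (by gcongr)
    _ = mixConst p * r * (h + Real.log r) * Real.log r := by unfold mixConst; ring

lemma eventually_mul_add_log_le {ε : ℝ} (hε : ε < 1) :
    ∀ᶠ r : ℕ in atTop, ε * r + 5 * Real.log r + 2 ≤ r := by
  have hlog := (Real.isLittleO_log_id_atTop.comp_tendsto tendsto_natCast_atTop_atTop).def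
    (show (0 : ℝ) < (1 - ε) / 10 by linarith)
  have hlarge : ∀ᶠ r : ℕ in atTop, 4 / (1 - ε) ≤ r :=
    tendsto_natCast_atTop_atTop.eventually_ge_atTop _
  filter_upwards [hlog, hlarge] with r hlog_r hr
  rw [div_le_iff₀ (by linarith)] at hr
  simp only [Function.comp, id, Real.norm_eq_abs, Nat.abs_cast] at hlog_r
  nlinarith [le_abs_self (Real.log r)]

lemma eventually_mixTime_paQ_heis_le (hp : p ≠ 2) {ε : ℝ} (hε : ε < 1) :
    ∀ᶠ r : ℕ in atTop, ∀ (W : Type u) [AddCommGroup W] [Module (ZMod p) W] [Fintype W]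
      [DecidableEq W] [HeisData p W], (∀ v : W, ω (p := p) v v = 0) →
      (∃ v w : W, ω (p := p) v w ≠ 0) → Module.finrank (ZMod p) W ≤ ε * r →
      (mixTime (paQ p r (W × ZMod p)) (unifOn (genSet r (W × ZMod p)))
          (genSet r (W × ZMod p)) : ℝ) ≤
        mixConst p * r * (Module.finrank (ZMod p) W + Real.log r) * Real.log r := by
  have hp3 : 3 ≤ p := (Fact.out : p.Prime).two_le.lt_of_ne' hp
  filter_upwards [eventually_exists_mixing_of_card_eq p hp3, eventually_mul_add_log_le hε,
    eventually_ge_atTop 3, tendsto_natCast_atTop_atTop.eventually_ge_atTop (256 * Real.log p)]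
    with r hmix hlarge hr hrp W _ _ _ _ _ hω hne hh
  obtain ⟨T, hT, hTmix⟩ := hmix
  have : 0 ≤ Real.log p := Real.log_natCast_nonneg p
  have : 0 ≤ Real.log r := Real.log_natCast_nonneg r
  set h := Module.finrank (ZMod p) W
  have hc : (⌈5 * Real.log r⌉₊ : ℝ) ≤ 5 * Real.log r + 1 :=
    (Nat.ceil_lt_add_one (by positivity)).le
  have hbr : h + ⌈5 * Real.log r⌉₊ + 1 ≤ r := by
    have : (h + ⌈5 * Real.log r⌉₊ + 1 : ℝ) ≤ r := by linarith
    exact_mod_cast this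
  refine (Nat.cast_le.2 (mixTime_paQ_heis_le hp hω hne (by omega) hrp
    (hTmix (Multiplicative (ZMod p)) (by simp [ZMod.card])) (Nat.le_ceil _) hbr (Nat.le_ceil _)
    (Nat.le_ceil _))).trans (mul_add_le_mixConst_mul hr hc ?_ hT ?_)
  all_goals exact (Nat.ceil_lt_add_one (by positivity)).le

end Parameters

theorem stmt18_general (p : ℕ) [Fact p.Prime] (hp : p ≠ 2) :
    ∃ C : ℝ, 0 < C ∧ ∀ ε : ℝ, ε < 1 → ∃ r₀ : ℕ, ∀ r : ℕ, r₀ ≤ r →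
      ∀ (W : Type u) [AddCommGroup W] [Module (ZMod p) W] [Fintype W] [DecidableEq W]
        [HeisData p W],
        (∀ v : W, HeisData.ω (p := p) v v = 0) →
        (∃ v w : W, HeisData.ω (p := p) v w ≠ 0) →
        (Module.finrank (ZMod p) W : ℝ) ≤ ε * r →
        (mixTime (paQ p r (W × ZMod p)) (unifOn (genSet r (W × ZMod p)))
            (genSet r (W × ZMod p)) : ℝ) ≤
          C * r * (Module.finrank (ZMod p) W + Real.log r) * Real.log r ∧
        (Real.log r ≤ Module.finrank (ZMod p) W →
          (mixTime (paQ p r (W × ZMod p)) (unifOn (genSet r (W × ZMod p)))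
              (genSet r (W × ZMod p)) : ℝ) ≤
            C * r * Module.finrank (ZMod p) W * Real.log r) := by
  have hpos := mixConst_pos p
  refine ⟨2 * mixConst p, by positivity, fun ε hε => ?_⟩
  obtain ⟨r₀, hr₀⟩ := Filter.eventually_atTop.1 (eventually_mixTime_paQ_heis_le hp hε)
  refine ⟨r₀, fun r hr W _ _ _ _ _ hω hne hh => ?_⟩
  have hmix := hr₀ r hr W hω hne hh
  have : 0 ≤ Real.log r := Real.log_natCast_nonneg r
  refine ⟨hmix.trans ?_, fun hlog => hmix.trans ?_⟩
  · gcongr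
    linarith
  · calc _ ≤ mixConst p * r * (Module.finrank (ZMod p) W + Module.finrank (ZMod p) W) *
          Real.log r := by gcongr
      _ = _ := by ring

theorem stmt18 :
    ∀ (p : ℕ) [Fact (Nat.Prime p)], p ≠ 2 →
    ∀ ε : ℝ, 0 < ε → ε < 1 →
      ∃ C : ℝ, 0 < C ∧ ∃ r₀ : ℕ, ∀ r : ℕ, r₀ ≤ r →
        ∀ (m : ℕ) (W : Type) [AddCommGroup W] [Module (ZMod p) W] [Fintype W]
          [DecidableEq W] [HeisData p W],
          1 ≤ m → Module.finrank (ZMod p) W = 2 * m →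
          (∀ v : W, HeisData.ω (p := p) v v = 0) →
          (∀ v : W, (∀ w : W, HeisData.ω (p := p) v w = 0) → v = 0) →
          (2 * m : ℝ) ≤ ε * r →
          (mixTime (paQ p r (W × ZMod p)) (unifOn (genSet r (W × ZMod p)))
              (genSet r (W × ZMod p)) : ℝ) ≤
            C * r * ((2 * m : ℝ) + Real.log r) * Real.log r ∧
          (Real.log r ≤ (2 * m : ℝ) →
            (mixTime (paQ p r (W × ZMod p)) (unifOn (genSet r (W × ZMod p)))
                (genSet r (W × ZMod p)) : ℝ) ≤
              C * r * (2 * m : ℝ) * Real.log r) := by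
  intro p _ hp ε _ hε
  obtain ⟨C, hC, hmix⟩ := stmt18_general p hp
  obtain ⟨r₀, hr₀⟩ := hmix ε hε
  refine ⟨C, hC, r₀, fun r hr m W _ _ _ _ _ hm hW hω hnd hmr => ?_⟩
  have hne := exists_ω_ne_zero_of_nondegenerate (by omega) hnd
  simpa [hW] using hr₀ r hr W hω hne (by simpa [hW] using hmr)
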